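/- Let 0 < α ≤ 1 and 1 ≤ p < 2. Then there exists a constant C > 0 such that for every j ∈ ℤ_+ and every f ∈ L¹_loc(ℝⁿ), ‖S_{α,2^j}(f)‖_{L^p(ℝⁿ)} ≤ C · 2^{jn/p} ‖S_α(f)‖_{L^p(ℝⁿ)}. -/

import Mathlib

/-! The square function `S_{α,β}(f)(x)` is the root of the mass that the density
`A_α(f)² / t^{n+1}` gives to the cone of aperture `β` with vertex `x` (`Salpha_eq`), so with
`r = p / 2 < 1` and `β = 2 ^ j` the theorem compares `L^r` quasi-norms of the masses `V_β` and `V_1`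
of the cones of a fixed measurable density.

*Change of aperture.* For a level `s` put `Ω = {V_1 > s}` and let `Ω*` be the union of the balls
`B(y, βt)` such that more than half of `B(y, t)` lies in `Ω`. Vitali's covering lemma gives
`|Ω*| ≲ βⁿ |Ω|` (`volume_dilate_le`), and Fubini's theorem gives
`∫_{(Ω*)ᶜ} V_β ≲ βⁿ ∫_{Ωᶜ} V_1` (`lintegral_compl_dilate_le`). Hence
`|{V_β > s}| ≲ βⁿ (|{V_1 > s}| + s⁻¹ ∫_{V_1 ≤ s} V_1)`, and integration against `r s^{r-1} ds`,
which converges because `r < 1`, gives `∫ V_β^r ≲ βⁿ ∫ V_1^r` (`lintegral_rpow_coneV_le`). The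
supremum in `A_α` may be taken over a countable family, which makes the density measurable
(`ofReal_Aalpha`).

*Infinite cone masses.* The square functions are defined by Bochner integrals, so at a vertex where
the integral over the cone diverges they vanish, and the argument above needs `V_1 < ∞` almost
everywhere. Without this the following dichotomy is used. The part of `V_1` coming from heights
`t < 1` is always finite almost everywhere (`ae_coneV_locDens_lt_top`). So if `V_1` is not almost
everywhere finite, there is a vertex whose cone has infinite mass at heights `t ≥ 1`. Densities being
bounded on bounded regions with `t ≥ 1`, the divergence occurs as `t → ∞`. There a cone of
aperture `1` is contained in every cone of aperture `2`, whatever the vertices, so `V_β = ∞` at every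
vertex (`coneV_eq_top`), the left-hand side vanishes, and the inequality is trivial.

*Local finiteness.* One may take `f ∈ L¹`. Let `F` be the set where the maximal function of `f` is at
most `λ`; these sets exhaust `ℝⁿ` up to a null set (`ae_exists_mem_lowSet`). By Fubini's theorem it
suffices to bound the integral of `A_α(f)² dy dt / t` over the sawtooth region above `F`. After a
measurable selection of profiles this is `‖T f‖²` for a linear operator `T` such that `T T*` satisfies
Schur's condition, by almost orthogonality of the kernels (`exists_schur_bound`). Since `f` itself need
not be in `L²`, a Calderón–Zygmund argument is made without a decomposition of `f`: one writes
`‖T f‖² = ⟨f, T* T f⟩`, replaces `T* T f` at `w` by its average over a ball of radius comparable to the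
distance of `w` to `F`, at a bounded cost (`exists_osc_bound`), and observes that `|f|` spread over
these balls is bounded (`spread_le`). This is `lintegral_sq_le_of_TT`, applied in
`exists_sawtooth_bound`.
-/

open MeasureTheory Metric Set

noncomputable section

/-- `ℝⁿ` as a Euclidean space. -/
abbrev Rn (n : ℕ) := EuclideanSpace ℝ (Fin n)

/-- The family `𝒞_α` of real functions supported in the closed unit ball, with vanishing
integral, satisfying the Hölder condition `|φ x - φ x'| ≤ |x - x'|^α`. -/
def Calpha (n : ℕ) (α : ℝ) : Set (Rn n → ℝ) :=
  {φ | (∀ x : Rn n, 1 < ‖x‖ → φ x = 0) ∧ ((∫ x, φ x) = 0) ∧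
    ∀ x x' : Rn n, |φ x - φ x'| ≤ ‖x - x'‖ ^ α}

/-- `A_α(f)(y,t) = sup_{φ ∈ 𝒞_α} |(f * φ_t)(y)|`, where `φ_t(x) = t⁻ⁿ φ(x/t)`. -/
def Aalpha {n : ℕ} (α : ℝ) (f : Rn n → ℝ) (y : Rn n) (t : ℝ) : ℝ :=
  ⨆ φ ∈ Calpha n α, |∫ z, (t ^ n)⁻¹ * φ (t⁻¹ • (y - z)) * f z|

/-- The intrinsic square function `S_{α,β}` of aperture `β`. -/
def Salpha {n : ℕ} (α β : ℝ) (f : Rn n → ℝ) (x : Rn n) : ℝ :=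
  Real.sqrt (∫ p in {p : Rn n × ℝ | 0 < p.2 ∧ dist x p.1 < β * p.2},
    Aalpha α f p.1 p.2 ^ 2 / p.2 ^ (n + 1))

/-- The intrinsic `g^*_λ` function. -/
def gstarAlpha {n : ℕ} (α lam : ℝ) (f : Rn n → ℝ) (x : Rn n) : ℝ :=
  Real.sqrt (∫ p in {p : Rn n × ℝ | 0 < p.2},
    (p.2 / (p.2 + dist x p.1)) ^ (lam * n) * Aalpha α f p.1 p.2 ^ 2 / p.2 ^ (n + 1))

/-- The intrinsic Littlewood–Paley `g`-function. -/
def gAlpha {n : ℕ} (α : ℝ) (f : Rn n → ℝ) (x : Rn n) : ℝ :=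
  Real.sqrt (∫ t in Ioi (0 : ℝ), Aalpha α f x t ^ 2 / t)

/-- The commutator kernel
`sup_{φ ∈ 𝒞_α} |∫ (b x - b z) φ_t (y - z) f z dz|`. -/
def commAalpha {n : ℕ} (α : ℝ) (b f : Rn n → ℝ) (x y : Rn n) (t : ℝ) : ℝ :=
  ⨆ φ ∈ Calpha n α, |∫ z, (b x - b z) * ((t ^ n)⁻¹ * φ (t⁻¹ • (y - z))) * f z|

/-- The commutator `[b, S_α]`. -/
def commS {n : ℕ} (α : ℝ) (b f : Rn n → ℝ) (x : Rn n) : ℝ :=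
  Real.sqrt (∫ p in {p : Rn n × ℝ | 0 < p.2 ∧ dist x p.1 < p.2},
    commAalpha α b f x p.1 p.2 ^ 2 / p.2 ^ (n + 1))

/-- The commutator `[b, g^*_{λ,α}]`. -/
def commGstar {n : ℕ} (α lam : ℝ) (b f : Rn n → ℝ) (x : Rn n) : ℝ :=
  Real.sqrt (∫ p in {p : Rn n × ℝ | 0 < p.2},
    (p.2 / (p.2 + dist x p.1)) ^ (lam * n) * commAalpha α b f x p.1 p.2 ^ 2 / p.2 ^ (n + 1))

/-- The commutator `[b, g_α]`. -/
def commG {n : ℕ} (α : ℝ) (b f : Rn n → ℝ) (x : Rn n) : ℝ :=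
  Real.sqrt (∫ t in Ioi (0 : ℝ), commAalpha α b f x x t ^ 2 / t)

/-- `A` is an admissible constant for `f` in the generalized Morrey space `L^{p,Φ}`:
`∫_{B(x₀,r)} |f|^p ≤ A^p Φ(r)` for all balls.  The Morrey norm `‖f‖_{L^{p,Φ}}` is the least
such `A ≥ 0`, and `f ∈ L^{p,Φ}` iff some such `A` exists. -/
def MorreyBound {n : ℕ} (p : ℝ) (Φ : ℝ → ℝ) (f : Rn n → ℝ) (A : ℝ) : Prop :=
  ∀ (x₀ : Rn n) (r : ℝ), 0 < r → (∫ x in ball x₀ r, |f x| ^ p) ≤ A ^ p * Φ r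

/-- `A` is an admissible constant for `g` in the weak space `WL^{1,Φ}`:
`σ |{x ∈ B(x₀,r) : g x > σ}| ≤ A Φ(r)` for all balls and all `σ > 0`. -/
def WeakMorreyBound {n : ℕ} (Φ : ℝ → ℝ) (g : Rn n → ℝ) (A : ℝ) : Prop :=
  ∀ (x₀ : Rn n) (r : ℝ), 0 < r → ∀ σ : ℝ, 0 < σ →
    σ * (volume {x ∈ ball x₀ r | σ < g x}).toReal ≤ A * Φ r

/-- Average of `b` over the ball `B(x₀,r)`. -/
def ballAvg {n : ℕ} (b : Rn n → ℝ) (x₀ : Rn n) (r : ℝ) : ℝ :=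
  (volume (ball x₀ r)).toReal⁻¹ * ∫ y in ball x₀ r, b y

/-- `b ∈ BMO(ℝⁿ)`. -/
def IsBMO {n : ℕ} (b : Rn n → ℝ) : Prop :=
  LocallyIntegrable b volume ∧ ∃ K : ℝ, ∀ (x₀ : Rn n) (r : ℝ), 0 < r →
    (∫ x in ball x₀ r, |b x - ballAvg b x₀ r|) ≤ K * (volume (ball x₀ r)).toReal

/-- The Hardy–Littlewood maximal function. -/
def hlMaximal {n : ℕ} (g : Rn n → ℝ) (x : Rn n) : ℝ :=
  ⨆ (x₀ : Rn n) (r : ℝ), ⨆ (_ : 0 < r ∧ x ∈ ball x₀ r),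
    (volume (ball x₀ r)).toReal⁻¹ * ∫ y in ball x₀ r, |g y|

/-! ### Change of aperture for a measurable density on the upper half-space -/

open scoped ENNReal

lemma volume_ball_eq {n : ℕ} (hn : 0 < n) (x : Rn n) {r : ℝ} (hr : 0 ≤ r) :
    volume (ball x r) = ENNReal.ofReal (r ^ n) * volume (ball (0 : Rn n) 1) := by
  have : Nonempty (Fin n) := ⟨⟨0, hn⟩⟩
  simpa using Measure.addHaar_ball (volume : Measure (Rn n)) x hr

lemma volume_ball_mul {n : ℕ} (hn : 0 < n) (x x' : Rn n) {b r : ℝ} (hb : 0 ≤ b) (hr : 0 ≤ r) :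
    volume (ball x (b * r)) = ENNReal.ofReal (b ^ n) * volume (ball x' r) := by
  rw [volume_ball_eq hn x (mul_nonneg hb hr), volume_ball_eq hn x' hr, mul_pow,
    ENNReal.ofReal_mul (by positivity), mul_assoc]

/-- The mass that the density `a` gives to the cone of aperture `β` with vertex `x`. -/
def coneV {n : ℕ} (a : Rn n × ℝ → ℝ≥0∞) (β : ℝ) (x : Rn n) : ℝ≥0∞ :=
  ∫⁻ p in {p : Rn n × ℝ | 0 < p.2 ∧ dist x p.1 < β * p.2}, a p

lemma measurableSet_cone {n : ℕ} (β : ℝ) (x : Rn n) :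
    MeasurableSet {p : Rn n × ℝ | 0 < p.2 ∧ dist x p.1 < β * p.2} := by
  apply MeasurableSet.inter
  · exact measurableSet_lt measurable_const measurable_snd
  · exact measurableSet_lt (f := fun p : Rn n × ℝ => dist x p.1) (g := fun p => β * p.2)
      (by fun_prop) (by fun_prop)

lemma measurableSet_cone_graph {n : ℕ} (β : ℝ) :
    MeasurableSet {w : Rn n × (Rn n × ℝ) | 0 < w.2.2 ∧ dist w.1 w.2.1 < β * w.2.2} := by
  apply MeasurableSet.inter
  · exact measurableSet_lt measurable_const (measurable_snd.comp measurable_snd)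
  · exact measurableSet_lt (f := fun w : Rn n × (Rn n × ℝ) => dist w.1 w.2.1)
      (g := fun w => β * w.2.2) (by fun_prop) (by fun_prop)

lemma coneV_eq {n : ℕ} (a : Rn n × ℝ → ℝ≥0∞) (β : ℝ) (x : Rn n) :
    coneV a β x = ∫⁻ p, {w : Rn n × (Rn n × ℝ) | 0 < w.2.2 ∧ dist w.1 w.2.1 < β * w.2.2}.indicator
      (fun w => a w.2) (x, p) := by
  rw [coneV, ← lintegral_indicator (measurableSet_cone β x)]
  rfl

lemma measurable_coneV {n : ℕ} {a : Rn n × ℝ → ℝ≥0∞} (ha : Measurable a) (β : ℝ) :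
    Measurable (coneV a β) := by
  have : coneV a β = _ := funext (coneV_eq a β)
  rw [this]
  exact Measurable.lintegral_prod_right'
    ((ha.comp measurable_snd).indicator (measurableSet_cone_graph β))

/-- Fubini: a point `(y, t)` lies in the cone with vertex `x` exactly when `x ∈ B(y, βt)`. -/
lemma lintegral_coneV {n : ℕ} {a : Rn n × ℝ → ℝ≥0∞} (ha : Measurable a) (β : ℝ)
    (E : Set (Rn n)) :
    ∫⁻ x in E, coneV a β x =
      ∫⁻ p in {p : Rn n × ℝ | 0 < p.2}, a p * volume (ball p.1 (β * p.2) ∩ E) := by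
  have hS := measurableSet_cone_graph (n := n) β
  have hpos : MeasurableSet {p : Rn n × ℝ | 0 < p.2} :=
    measurableSet_lt measurable_const measurable_snd
  simp_rw [coneV_eq]
  rw [lintegral_lintegral_swap, ← lintegral_indicator hpos]
  · refine lintegral_congr fun p => ?_
    by_cases hp : 0 < p.2
    · rw [indicator_of_mem (by exact hp)]
      have : ∀ x : Rn n, {w : Rn n × (Rn n × ℝ) | 0 < w.2.2 ∧ dist w.1 w.2.1 < β * w.2.2}.indicator
          (fun w => a w.2) (x, p) = (ball p.1 (β * p.2)).indicator (fun _ => a p) x := by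
        intro x
        by_cases hx : dist x p.1 < β * p.2
        · rw [indicator_of_mem (by exact ⟨hp, hx⟩), indicator_of_mem (by exact hx)]
        · rw [indicator_of_notMem (by exact fun h => hx h.2),
            indicator_of_notMem (by exact hx)]
      simp_rw [this]
      rw [lintegral_indicator measurableSet_ball, lintegral_const, Measure.restrict_apply_univ,
        Measure.restrict_apply measurableSet_ball]
    · rw [indicator_of_notMem (by exact hp)]
      have : ∀ x : Rn n, {w : Rn n × (Rn n × ℝ) | 0 < w.2.2 ∧ dist w.1 w.2.1 < β * w.2.2}.indicator
          (fun w => a w.2) (x, p) = 0 := by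
        intro x
        exact indicator_of_notMem (by exact fun h => hp h.1) _
      simp_rw [this]
      simp
  · exact ((ha.comp measurable_snd).indicator hS).aemeasurable

/-- The union of the balls `B(y, βt)` over which more than half of `B(y, t)` lies in `Ω`.  Its
measure is at most a multiple of `βⁿ |Ω|`, by the Vitali covering lemma applied to the large
balls `B(y, βt)`. -/
def dilate {n : ℕ} (β : ℝ) (Ω : Set (Rn n)) : Set (Rn n) :=
  ⋃ p ∈ {p : Rn n × ℝ | 0 < p.2 ∧ volume (ball p.1 p.2) < 2 * volume (ball p.1 p.2 ∩ Ω)},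
    ball p.1 (β * p.2)

lemma volume_dilate_le {n : ℕ} (hn : 0 < n) {β : ℝ} (hβ : 1 ≤ β) {Ω : Set (Rn n)}
    (hΩ : MeasurableSet Ω) :
    volume (dilate β Ω) ≤ ENNReal.ofReal (2 * (5 * β) ^ n) * volume Ω := by
  have hβ0 : 0 < β := by linarith
  have hc : 0 < 2 * (5 * β) ^ n := by positivity
  by_cases hfin : volume Ω = ∞
  · rw [hfin, ENNReal.mul_top (by simpa using hc)]
    exact le_top
  set T := {p : Rn n × ℝ | 0 < p.2 ∧ volume (ball p.1 p.2) < 2 * volume (ball p.1 p.2 ∩ Ω)}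
    with hT
  set v := volume (ball (0 : Rn n) 1) with hv
  have hv0 : v ≠ 0 := (measure_ball_pos volume _ one_pos).ne'
  have hvt : v ≠ ∞ := measure_ball_lt_top.ne
  -- The radii are bounded since `|B(y, t)| < 2 |Ω| < ∞`.
  have hrad : ∃ R : ℝ, ∀ p ∈ T, β * p.2 ≤ R := by
    refine ⟨β * max 1 (2 * volume Ω / v).toReal, fun p hp => ?_⟩
    apply mul_le_mul_of_nonneg_left _ hβ0.le
    by_contra! hcon
    have h1 : 1 < p.2 := (le_max_left _ _).trans_lt hcon
    have h2 : (2 * volume Ω / v).toReal < p.2 := (le_max_right _ _).trans_lt hcon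
    have h3 : ENNReal.ofReal (p.2 ^ n) * v < 2 * volume Ω := by
      rw [← volume_ball_eq hn p.1 hp.1.le]
      exact hp.2.trans_le (by gcongr; exact inter_subset_right)
    have h4 : ENNReal.ofReal p.2 ≤ ENNReal.ofReal (p.2 ^ n) :=
      ENNReal.ofReal_le_ofReal (le_self_pow₀ h1.le hn.ne')
    have h5 : ENNReal.ofReal p.2 < 2 * volume Ω / v := by
      rw [ENNReal.lt_div_iff_mul_lt (Or.inl hv0) (Or.inl hvt)]
      exact (by gcongr : _ ≤ _).trans_lt h3
    have h6 : 2 * volume Ω / v ≠ ∞ :=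
      ENNReal.div_ne_top (ENNReal.mul_ne_top (by simp) hfin) hv0
    rw [← ENNReal.ofReal_lt_ofReal_iff (by linarith), ENNReal.ofReal_toReal h6] at h2
    exact lt_asymm h2 h5
  obtain ⟨R, hR⟩ := hrad
  obtain ⟨u, huT, hdisj, hcov⟩ := Vitali.exists_disjoint_subfamily_covering_enlargement_closedBall
    T (fun p => p.1) (fun p => β * p.2) R hR 5 (by norm_num)
  have hucount : u.Countable := by
    refine hdisj.countable_of_nonempty_interior fun p hp => ?_
    refine ⟨p.1, ?_⟩
    have : 0 < β * p.2 := mul_pos hβ0 (huT hp).1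
    exact ball_subset_interior_closedBall (mem_ball_self this)
  have hsub : dilate β Ω ⊆ ⋃ p ∈ u, closedBall p.1 (5 * (β * p.2)) := by
    intro x hx
    simp only [dilate, mem_iUnion] at hx
    obtain ⟨p, hp, hx⟩ := hx
    obtain ⟨q, hq, hpq⟩ := hcov p hp
    simp only [mem_iUnion]
    exact ⟨q, hq, hpq (ball_subset_closedBall hx)⟩
  have hdisj' : u.PairwiseDisjoint (fun p : Rn n × ℝ => ball p.1 p.2 ∩ Ω) := by
    refine hdisj.mono_on fun p hp => ?_
    refine inter_subset_left.trans (ball_subset_closedBall.trans (closedBall_subset_closedBall ?_))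
    nlinarith [(huT hp).1]
  have : Nonempty (Fin n) := ⟨⟨0, hn⟩⟩
  calc volume (dilate β Ω) ≤ volume (⋃ p ∈ u, closedBall p.1 (5 * (β * p.2))) :=
        measure_mono hsub
    _ ≤ ∑' p : u, volume (closedBall p.1.1 (5 * (β * p.1.2))) := measure_biUnion_le _ hucount _
    _ ≤ ∑' p : u, ENNReal.ofReal (2 * (5 * β) ^ n) * volume (ball p.1.1 p.1.2 ∩ Ω) := by
        refine ENNReal.tsum_le_tsum fun p => ?_
        have hp := huT p.2
        rw [Measure.addHaar_closedBall_eq_addHaar_ball, ← mul_assoc,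
          volume_ball_mul hn _ p.1.1 (by positivity) hp.1.le, mul_comm (2 : ℝ),
          ENNReal.ofReal_mul (by positivity), mul_assoc]
        gcongr
        simpa using hp.2.le
    _ = ENNReal.ofReal (2 * (5 * β) ^ n) * ∑' p : u, volume (ball p.1.1 p.1.2 ∩ Ω) :=
        ENNReal.tsum_mul_left
    _ = ENNReal.ofReal (2 * (5 * β) ^ n) * volume (⋃ p ∈ u, ball p.1 p.2 ∩ Ω) := by
        rw [measure_biUnion hucount hdisj' fun p _ => measurableSet_ball.inter hΩ]
    _ ≤ _ := by
        gcongr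
        exact iUnion₂_subset fun _ _ => inter_subset_right

/-- Off the enlarged set, every ball `B(y, t)` of the wide cone has at least half of its mass
outside `Ω`, so the wide aperture is controlled by the narrow one. -/
lemma lintegral_compl_dilate_le {n : ℕ} (hn : 0 < n) {a : Rn n × ℝ → ℝ≥0∞} (ha : Measurable a)
    {β : ℝ} (hβ : 1 ≤ β) {Ω : Set (Rn n)} (hΩ : MeasurableSet Ω) :
    ∫⁻ x in (dilate β Ω)ᶜ, coneV a β x ≤
      ENNReal.ofReal (2 * β ^ n) * ∫⁻ x in Ωᶜ, coneV a 1 x := by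
  have hβ0 : 0 < β := by linarith
  have hpos : MeasurableSet {p : Rn n × ℝ | 0 < p.2} :=
    measurableSet_lt measurable_const measurable_snd
  rw [lintegral_coneV ha β, lintegral_coneV ha 1,
    ← lintegral_const_mul' _ _ ENNReal.ofReal_ne_top]
  refine setLIntegral_mono_ae' hpos (Filter.Eventually.of_forall fun p hp => ?_)
  have hp : 0 < p.2 := hp
  rw [mul_left_comm]
  gcongr
  rw [one_mul]
  by_cases hbad : volume (ball p.1 p.2) < 2 * volume (ball p.1 p.2 ∩ Ω)
  · have : ball p.1 (β * p.2) ∩ (dilate β Ω)ᶜ = ∅ := by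
      rw [← subset_empty_iff]
      rintro x ⟨hx, hx'⟩
      exact hx' (mem_biUnion (show p ∈ {p : Rn n × ℝ | _} from ⟨hp, hbad⟩) hx)
    rw [this, measure_empty]
    exact zero_le
  · push Not at hbad
    have hsplit : volume (ball p.1 p.2 ∩ Ω) + volume (ball p.1 p.2 ∩ Ωᶜ) = volume (ball p.1 p.2) := by
      rw [← sdiff_eq]
      exact measure_inter_add_sdiff _ hΩ
    have hfin : volume (ball p.1 p.2 ∩ Ω) ≠ ∞ :=
      ((measure_mono inter_subset_left).trans_lt measure_ball_lt_top).ne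
    have h2 : volume (ball p.1 p.2) ≤ 2 * volume (ball p.1 p.2 ∩ Ωᶜ) := by
      rw [← hsplit] at hbad ⊢
      rw [two_mul] at hbad ⊢
      exact add_le_add_left ((ENNReal.add_le_add_iff_left hfin).1 hbad) _
    calc volume (ball p.1 (β * p.2) ∩ (dilate β Ω)ᶜ) ≤ volume (ball p.1 (β * p.2)) :=
          measure_mono inter_subset_left
      _ = ENNReal.ofReal (β ^ n) * volume (ball p.1 p.2) :=
          volume_ball_mul hn _ _ hβ0.le hp.le
      _ ≤ ENNReal.ofReal (β ^ n) * (2 * volume (ball p.1 p.2 ∩ Ωᶜ)) := by gcongr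
      _ = _ := by
          rw [mul_comm (2 : ℝ), ENNReal.ofReal_mul (by positivity), mul_assoc]
          simp

/-- Distributional estimate at level `s`: `{coneV a β > s}` is covered by the enlargement of
`Ω = {coneV a 1 > s}` and by a set outside it, to which Chebyshev's inequality applies. -/
lemma meas_coneV_le {n : ℕ} (hn : 0 < n) {a : Rn n × ℝ → ℝ≥0∞} (ha : Measurable a)
    {β : ℝ} (hβ : 1 ≤ β) {s : ℝ} (hs : 0 < s) :
    volume {x | ENNReal.ofReal s < coneV a β x} ≤
      ENNReal.ofReal (2 * (5 * β) ^ n) * (volume {x | ENNReal.ofReal s < coneV a 1 x} +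
        ENNReal.ofReal s⁻¹ * ∫⁻ x in {x | ENNReal.ofReal s < coneV a 1 x}ᶜ, coneV a 1 x) := by
  have hβ0 : 0 < β := by linarith
  set Ω := {x | ENNReal.ofReal s < coneV a 1 x} with hΩd
  have hΩ : MeasurableSet Ω := measurableSet_lt measurable_const (measurable_coneV ha 1)
  have hs0 : ENNReal.ofReal s ≠ 0 := by simpa using hs
  have hsub : {x | ENNReal.ofReal s < coneV a β x} ⊆ dilate β Ω ∪
      ({x | ENNReal.ofReal s ≤ coneV a β x} ∩ (dilate β Ω)ᶜ) := by
    intro x hx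
    by_cases hd : x ∈ dilate β Ω
    · exact Or.inl hd
    · exact Or.inr ⟨(show ENNReal.ofReal s < coneV a β x from hx).le, hd⟩
  have hmk := mul_meas_ge_le_lintegral (μ := volume.restrict (dilate β Ω)ᶜ)
    (measurable_coneV ha β) (ENNReal.ofReal s)
  rw [Measure.restrict_apply (measurableSet_le measurable_const (measurable_coneV ha β))] at hmk
  have hcomp := hmk.trans (lintegral_compl_dilate_le hn ha hβ hΩ)
  rw [ENNReal.ofReal_inv_of_pos hs, mul_add]
  refine (measure_mono hsub).trans ((measure_union_le _ _).trans ?_)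
  gcongr
  · exact volume_dilate_le hn hβ hΩ
  · rw [← ENNReal.mul_le_mul_iff_right hs0 ENNReal.ofReal_ne_top]
    refine hcomp.trans ?_
    rw [mul_left_comm, ← mul_assoc (ENNReal.ofReal s), ENNReal.mul_inv_cancel hs0 ENNReal.ofReal_ne_top,
      one_mul]
    gcongr
    linarith

/-- The last step of the layer cake formula: `∫ s^(r-2) ds` over `s ≥ w`, times `w`, is a multiple
of `w^r` because `r < 1`. -/
lemma mul_lintegral_Ioi_rpow_le {r : ℝ} (hr1 : r < 1) {w : ℝ≥0∞} (hw : w < ∞) :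
    w * ∫⁻ s in Ioi (0 : ℝ), {s : ℝ | w ≤ ENNReal.ofReal s}.indicator
      (fun s => ENNReal.ofReal (s ^ (r - 2))) s ≤
      ENNReal.ofReal (1 / (1 - r)) * ENNReal.ofReal (w.toReal ^ r) := by
  by_cases hw0 : w = 0
  · simp [hw0]
  have hc : 0 < w.toReal := ENNReal.toReal_pos hw0 hw.ne
  have hset : {s : ℝ | w ≤ ENNReal.ofReal s} = Ici w.toReal := by
    ext s
    simp only [mem_ofPred_eq, mem_Ici]
    by_cases hs : 0 < s
    · exact ENNReal.le_ofReal_iff_toReal_le hw.ne hs.le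
    · push Not at hs
      rw [ENNReal.ofReal_of_nonpos hs]
      constructor
      · intro h
        exact absurd (le_antisymm h zero_le) hw0
      · intro h
        linarith
  have h_int : ∫⁻ s in Ioi (0 : ℝ), {s : ℝ | w ≤ ENNReal.ofReal s}.indicator
      (fun s => ENNReal.ofReal (s ^ (r - 2))) s ≤
      ENNReal.ofReal (w.toReal ^ (r - 1) / (1 - r)) := by
    rw [hset]
    calc _ ≤ ∫⁻ s, (Ici w.toReal).indicator (fun s => ENNReal.ofReal (s ^ (r - 2))) s :=
          setLIntegral_le_lintegral _ _
      _ = ∫⁻ s in Ioi w.toReal, ENNReal.ofReal (s ^ (r - 2)) := by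
          rw [lintegral_indicator measurableSet_Ici]
          exact setLIntegral_congr Ioi_ae_eq_Ici.symm
      _ = ENNReal.ofReal (∫ s in Ioi w.toReal, s ^ (r - 2)) := by
          rw [ofReal_integral_eq_lintegral_ofReal (integrableOn_Ioi_rpow_of_lt (by linarith) hc)]
          filter_upwards [ae_restrict_mem measurableSet_Ioi] with s hs
          exact Real.rpow_nonneg (hc.trans hs).le _
      _ = _ := by
          rw [integral_Ioi_rpow_of_lt (by linarith) hc, show r - 2 + 1 = r - 1 by ring,
            show r - 1 = -(1 - r) by ring, neg_div_neg_eq]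
  calc _ ≤ w * ENNReal.ofReal (w.toReal ^ (r - 1) / (1 - r)) := by gcongr
    _ = ENNReal.ofReal (w.toReal * (w.toReal ^ (r - 1) / (1 - r))) := by
        rw [ENNReal.ofReal_mul hc.le, ENNReal.ofReal_toReal hw.ne]
    _ = ENNReal.ofReal (1 / (1 - r) * w.toReal ^ r) := by
        congr 1
        rw [Real.rpow_sub hc, Real.rpow_one]
        field_simp
    _ = _ := by
        rw [ENNReal.ofReal_mul]
        have : 0 < 1 - r := by linarith
        positivity

/-- Change of aperture in `L^r`, `0 < r < 1`, with the sharp growth `βⁿ`: integrate the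
distributional estimate against `r s^(r-1) ds`. The restriction `r < 1` makes the truncated first
moment integrable. Since `∞.toReal = 0`, finiteness of the narrow cone masses has to be assumed. -/
lemma lintegral_rpow_coneV_le {n : ℕ} (hn : 0 < n) {a : Rn n × ℝ → ℝ≥0∞} (ha : Measurable a)
    {β : ℝ} (hβ : 1 ≤ β) {r : ℝ} (hr0 : 0 < r) (hr1 : r < 1)
    (hfin : ∀ᵐ x, coneV a 1 x < ∞) :
    ∫⁻ x, ENNReal.ofReal ((coneV a β x).toReal ^ r) ≤
      ENNReal.ofReal (2 * (5 * β) ^ n * (1 + r / (1 - r))) *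
        ∫⁻ x, ENNReal.ofReal ((coneV a 1 x).toReal ^ r) := by
  have hβ0 : 0 < β := by linarith
  have h1r : 0 < 1 - r := by linarith
  have hmβ := measurable_coneV ha β
  have hm1 := measurable_coneV ha 1
  set K := ENNReal.ofReal (2 * (5 * β) ^ n) with hK
  set I := ∫⁻ x, ENNReal.ofReal ((coneV a 1 x).toReal ^ r) with hI
  have hL1 : I = ENNReal.ofReal r * ∫⁻ s in Ioi 0,
      volume {x | s < (coneV a 1 x).toReal} * ENNReal.ofReal (s ^ (r - 1)) :=
    lintegral_rpow_eq_lintegral_meas_lt_mul volume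
      (Filter.Eventually.of_forall fun _ => ENNReal.toReal_nonneg)
      hm1.ennreal_toReal.aemeasurable hr0
  set G : ℝ → Rn n → ℝ≥0∞ := fun s x => coneV a 1 x * {s : ℝ | coneV a 1 x ≤ ENNReal.ofReal s}.indicator
      (fun s => ENNReal.ofReal (s ^ (r - 2))) s with hG
  have hGm : Measurable (Function.uncurry G) := by
    refine (hm1.comp measurable_snd).mul ?_
    have : MeasurableSet {w : ℝ × Rn n | coneV a 1 w.2 ≤ ENNReal.ofReal w.1} :=
      measurableSet_le (hm1.comp measurable_snd) (ENNReal.measurable_ofReal.comp measurable_fst)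
    exact (show Measurable fun w : ℝ × Rn n => ENNReal.ofReal (w.1 ^ (r - 2)) by fun_prop).indicator this
  have hGi : Measurable fun s => ∫⁻ x, G s x := Measurable.lintegral_prod_right' hGm
  have hpt : ∀ s ∈ Ioi (0 : ℝ),
      volume {x | s < (coneV a β x).toReal} * ENNReal.ofReal (s ^ (r - 1)) ≤
      K * (volume {x | s < (coneV a 1 x).toReal} * ENNReal.ofReal (s ^ (r - 1))
        + ∫⁻ x, G s x) := by
    intro s hs
    have hs : 0 < s := hs
    have e1 : volume {x | s < (coneV a β x).toReal} ≤ volume {x | ENNReal.ofReal s < coneV a β x} := by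
      refine measure_mono fun x hx => ?_
      by_cases ht : coneV a β x = ∞
      · simp [ht]
      · exact (ENNReal.ofReal_lt_iff_lt_toReal hs.le ht).2 hx
    have e2 : volume {x | ENNReal.ofReal s < coneV a 1 x} = volume {x | s < (coneV a 1 x).toReal} := by
      refine measure_congr ?_
      filter_upwards [hfin] with x hx
      exact propext (ENNReal.ofReal_lt_iff_lt_toReal hs.le hx.ne)
    have e3 : ENNReal.ofReal s⁻¹ * (∫⁻ x in {x | ENNReal.ofReal s < coneV a 1 x}ᶜ, coneV a 1 x) *
        ENNReal.ofReal (s ^ (r - 1)) = ∫⁻ x, G s x := by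
      rw [mul_right_comm, ← ENNReal.ofReal_mul (by positivity),
        ← lintegral_indicator (measurableSet_lt measurable_const hm1).compl,
        ← lintegral_const_mul' _ _ ENNReal.ofReal_ne_top]
      refine lintegral_congr fun x => ?_
      rw [hG]
      by_cases hx : coneV a 1 x ≤ ENNReal.ofReal s
      · have hx1 : x ∈ {x | ENNReal.ofReal s < coneV a 1 x}ᶜ := by simpa using hx
        have hx2 : s ∈ {s : ℝ | coneV a 1 x ≤ ENNReal.ofReal s} := hx
        rw [indicator_of_mem hx1]
        simp only
        rw [indicator_of_mem hx2, mul_comm, show r - 2 = (r - 1) - 1 by ring,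
          Real.rpow_sub_one hs.ne' (r - 1), div_eq_inv_mul]
      · have hx1 : x ∉ {x | ENNReal.ofReal s < coneV a 1 x}ᶜ := by simpa using hx
        have hx2 : s ∉ {s : ℝ | coneV a 1 x ≤ ENNReal.ofReal s} := hx
        rw [indicator_of_notMem hx1]
        simp only
        rw [indicator_of_notMem hx2, mul_zero, mul_zero]
    calc _ ≤ K * (volume {x | ENNReal.ofReal s < coneV a 1 x} +
        ENNReal.ofReal s⁻¹ * ∫⁻ x in {x | ENNReal.ofReal s < coneV a 1 x}ᶜ, coneV a 1 x) *
          ENNReal.ofReal (s ^ (r - 1)) := by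
          gcongr
          exact e1.trans (meas_coneV_le hn ha hβ hs)
      _ = _ := by rw [mul_assoc, add_mul, e3, e2]
  have hGint : ∫⁻ s in Ioi (0 : ℝ), ∫⁻ x, G s x ≤ ENNReal.ofReal (1 / (1 - r)) * I := by
    rw [lintegral_lintegral_swap hGm.aemeasurable, hI, ← lintegral_const_mul' _ _ ENNReal.ofReal_ne_top]
    refine lintegral_mono_ae ?_
    filter_upwards [hfin] with x hx
    rw [hG]
    simp only
    rw [lintegral_const_mul' _ _ hx.ne]
    exact mul_lintegral_Ioi_rpow_le hr1 hx
  rw [lintegral_rpow_eq_lintegral_meas_lt_mul volume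
      (Filter.Eventually.of_forall fun _ => ENNReal.toReal_nonneg)
      hmβ.ennreal_toReal.aemeasurable hr0]
  calc _ ≤ ENNReal.ofReal r * ∫⁻ s in Ioi (0 : ℝ), K * (volume {x | s < (coneV a 1 x).toReal} *
          ENNReal.ofReal (s ^ (r - 1)) + ∫⁻ x, G s x) := by
        gcongr ENNReal.ofReal r * ?_
        exact setLIntegral_mono_ae' measurableSet_Ioi (Filter.Eventually.of_forall hpt)
    _ = K * (I + ENNReal.ofReal r * ∫⁻ s in Ioi (0 : ℝ), ∫⁻ x, G s x) := by
        rw [lintegral_const_mul' _ _ ENNReal.ofReal_ne_top, lintegral_add_right _ hGi, hL1]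
        ring
    _ ≤ K * (I + ENNReal.ofReal r * (ENNReal.ofReal (1 / (1 - r)) * I)) := by gcongr
    _ = K * ENNReal.ofReal (1 + r / (1 - r)) * I := by
        rw [← mul_assoc (ENNReal.ofReal r), ← ENNReal.ofReal_mul hr0.le, mul_one_div,
          ENNReal.ofReal_add zero_le_one (by positivity), ENNReal.ofReal_one]
        ring
    _ = _ := by rw [hK, ← ENNReal.ofReal_mul (by positivity)]

/-! ### The class `𝒞_α` and the maximal function `A_α` -/

/-- The kernel `φ_t(y - z)`, where `q = (y, t)`. -/
def ker {n : ℕ} (φ : Rn n → ℝ) (q : Rn n × ℝ) (z : Rn n) : ℝ :=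
  (q.2 ^ n)⁻¹ * φ (q.2⁻¹ • (q.1 - z))

/-- The convolution `(f * φ_t)(y)`, where `q = (y, t)`. -/
def conv {n : ℕ} (φ f : Rn n → ℝ) (q : Rn n × ℝ) : ℝ := ∫ z, ker φ q z * f z

lemma continuous_of_mem {n : ℕ} {α : ℝ} (hα : 0 < α) {φ : Rn n → ℝ} (h : φ ∈ Calpha n α) :
    Continuous φ := by
  rw [continuous_iff_continuousAt]
  intro x
  rw [ContinuousAt, tendsto_iff_dist_tendsto_zero]
  refine squeeze_zero (fun _ => dist_nonneg) (fun x' => ?_) (g := fun x' => ‖x' - x‖ ^ α) ?_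
  · rw [Real.dist_eq]
    exact h.2.2 x' x
  · have : Continuous fun x' : Rn n => ‖x' - x‖ ^ α :=
      (Real.continuous_rpow_const hα.le).comp (by fun_prop)
    simpa [Real.zero_rpow hα.ne'] using this.tendsto x

lemma zero_mem_Calpha (n : ℕ) (α : ℝ) : (fun _ => 0) ∈ Calpha n α :=
  ⟨fun _ _ => rfl, by simp, fun x x' => by simpa using Real.rpow_nonneg (norm_nonneg _) α⟩

lemma abs_le_of_mem {n : ℕ} (hn : 0 < n) {α : ℝ} (hα : 0 < α) (hα1 : α ≤ 1) {φ : Rn n → ℝ}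
    (h : φ ∈ Calpha n α) (x : Rn n) : |φ x| ≤ 3 := by
  by_cases hx : 1 < ‖x‖
  · rw [h.1 x hx]; norm_num
  push Not at hx
  have : Nonempty (Fin n) := ⟨⟨0, hn⟩⟩
  obtain ⟨e, he⟩ := exists_norm_eq (Rn n) (show (0 : ℝ) ≤ 2 by norm_num)
  have h1 := h.2.2 x e
  rw [h.1 e (by rw [he]; norm_num), sub_zero] at h1
  have h2 : ‖x - e‖ ≤ 3 := (norm_sub_le _ _).trans (by rw [he]; linarith)
  calc |φ x| ≤ ‖x - e‖ ^ α := h1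
    _ ≤ 3 ^ α := Real.rpow_le_rpow (norm_nonneg _) h2 hα.le
    _ ≤ 3 ^ (1 : ℝ) := Real.rpow_le_rpow_of_exponent_le (by norm_num) hα1
    _ = 3 := Real.rpow_one 3

lemma abs_ker_le {n : ℕ} (hn : 0 < n) {α : ℝ} (hα : 0 < α) (hα1 : α ≤ 1) {φ : Rn n → ℝ}
    (h : φ ∈ Calpha n α) {q : Rn n × ℝ} (hq : 0 < q.2) (z : Rn n) :
    |ker φ q z| ≤ 3 * (q.2 ^ n)⁻¹ := by
  have : 0 < (q.2 ^ n)⁻¹ := by positivity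
  rw [ker, abs_mul, abs_of_pos this, mul_comm]
  gcongr
  exact abs_le_of_mem hn hα hα1 h _

lemma ker_eq_zero {n : ℕ} {α : ℝ} {φ : Rn n → ℝ}
    (h : φ ∈ Calpha n α) {q : Rn n × ℝ} (hq : 0 < q.2) {z : Rn n} (hz : q.2 < dist z q.1) :
    ker φ q z = 0 := by
  rw [ker, h.1, mul_zero]
  rw [norm_smul, norm_inv, Real.norm_of_nonneg hq.le, ← dist_eq_norm, dist_comm, inv_mul_eq_div,
    lt_div_iff₀ hq, one_mul]
  exact hz

lemma abs_ker_sub_le {n : ℕ} {α : ℝ} {φ : Rn n → ℝ}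
    (h : φ ∈ Calpha n α) {q : Rn n × ℝ} (hq : 0 < q.2) (z z' : Rn n) :
    |ker φ q z - ker φ q z'| ≤ (q.2 ^ n)⁻¹ * (dist z z' / q.2) ^ α := by
  have h0 : 0 < (q.2 ^ n)⁻¹ := by positivity
  rw [ker, ker, ← mul_sub, abs_mul, abs_of_pos h0]
  gcongr
  refine (h.2.2 _ _).trans_eq ?_
  rw [← smul_sub, norm_smul, norm_inv, Real.norm_of_nonneg hq.le, sub_sub_sub_cancel_left,
    ← dist_eq_norm, dist_comm, inv_mul_eq_div]

lemma integral_ker {n : ℕ} {α : ℝ} {φ : Rn n → ℝ}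
    (h : φ ∈ Calpha n α) (q : Rn n × ℝ) : ∫ z, ker φ q z = 0 := by
  simp only [ker]
  rw [integral_const_mul, integral_sub_left_eq_self (fun z => φ (q.2⁻¹ • z)) volume q.1,
    Measure.integral_comp_smul, h.2.1, smul_zero, mul_zero]

lemma continuous_ker {n : ℕ} {α : ℝ} (hα : 0 < α) {φ : Rn n → ℝ}
    (h : φ ∈ Calpha n α) (q : Rn n × ℝ) : Continuous (ker φ q) := by
  have := continuous_of_mem hα h
  unfold ker
  fun_prop

lemma measurable_ker {n : ℕ} {α : ℝ} (hα : 0 < α) {φ : Rn n → ℝ}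
    (h : φ ∈ Calpha n α) : Measurable fun w : (Rn n × ℝ) × Rn n => ker φ w.1 w.2 := by
  have := (continuous_of_mem hα h).measurable
  unfold ker
  fun_prop

lemma measurable_conv {n : ℕ} {α : ℝ} (hα : 0 < α) {φ : Rn n → ℝ}
    (h : φ ∈ Calpha n α) {f : Rn n → ℝ} (hf : Measurable f) : Measurable (conv φ f) := by
  have : StronglyMeasurable (Function.uncurry fun (q : Rn n × ℝ) z => ker φ q z * f z) :=
    ((measurable_ker hα h).mul (hf.comp measurable_snd)).stronglyMeasurable
  exact this.integral_prod_right.measurable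

lemma abs_ker_mul_le {n : ℕ} (hn : 0 < n) {α : ℝ} (hα : 0 < α) (hα1 : α ≤ 1) {φ : Rn n → ℝ}
    (h : φ ∈ Calpha n α) {q : Rn n × ℝ} (hq : 0 < q.2) (f : Rn n → ℝ) (z : Rn n) :
    |ker φ q z * f z| ≤
      (closedBall q.1 q.2).indicator (fun z => 3 * (q.2 ^ n)⁻¹ * |f z|) z := by
  by_cases hz : z ∈ closedBall q.1 q.2
  · rw [indicator_of_mem hz, abs_mul]
    gcongr
    exact abs_ker_le hn hα hα1 h hq z
  · rw [indicator_of_notMem hz, ker_eq_zero h hq (by simpa using hz)]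
    simp

lemma integrable_indicator_ball {n : ℕ} {f : Rn n → ℝ} (hf : LocallyIntegrable f volume)
    (q : Rn n × ℝ) (c : ℝ) :
    Integrable ((closedBall q.1 q.2).indicator (fun z => c * |f z|)) volume := by
  rw [integrable_indicator_iff measurableSet_closedBall]
  exact ((hf.integrableOn_isCompact (isCompact_closedBall _ _)).norm).const_mul c

lemma integrable_ker_mul {n : ℕ} (hn : 0 < n) {α : ℝ} (hα : 0 < α) (hα1 : α ≤ 1) {φ : Rn n → ℝ}
    (h : φ ∈ Calpha n α) {q : Rn n × ℝ} (hq : 0 < q.2) {f : Rn n → ℝ}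
    (hf : LocallyIntegrable f volume) : Integrable (fun z => ker φ q z * f z) volume := by
  refine (integrable_indicator_ball hf q (3 * (q.2 ^ n)⁻¹)).mono'
    ((continuous_ker hα h q).aestronglyMeasurable.mul hf.aestronglyMeasurable)
    (Filter.Eventually.of_forall fun z => ?_)
  exact abs_ker_mul_le hn hα hα1 h hq f z

lemma abs_conv_le {n : ℕ} (hn : 0 < n) {α : ℝ} (hα : 0 < α) (hα1 : α ≤ 1) {φ : Rn n → ℝ}
    (h : φ ∈ Calpha n α) {q : Rn n × ℝ} (hq : 0 < q.2) {f : Rn n → ℝ}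
    (hf : LocallyIntegrable f volume) :
    |conv φ f q| ≤ 3 * (q.2 ^ n)⁻¹ * ∫ z in closedBall q.1 q.2, |f z| := by
  rw [← integral_const_mul, ← integral_indicator measurableSet_closedBall]
  rw [conv, ← Real.norm_eq_abs]
  exact norm_integral_le_of_norm_le (integrable_indicator_ball hf q _)
    (Filter.Eventually.of_forall fun z => abs_ker_mul_le hn hα hα1 h hq f z)

/-- The class `𝒞_α` is separable for uniform convergence. -/
lemma exists_seq_dense {n : ℕ} {α : ℝ} (hα : 0 < α) :
    ∃ Φ : ℕ → Rn n → ℝ, (∀ k, Φ k ∈ Calpha n α) ∧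
      ∀ ψ ∈ Calpha n α, ∀ δ > 0, ∃ k, ∀ x, |ψ x - Φ k x| ≤ δ := by
  let K := closedBall (0 : Rn n) 1
  have : CompactSpace K := isCompact_iff_compactSpace.1 (isCompact_closedBall _ _)
  let S : Set C(K, ℝ) := {g | ∃ φ ∈ Calpha n α, ∀ x : K, g x = φ x}
  have hmem : ∀ ψ ∈ Calpha n α, ∃ g : S, ∀ x : K, g.1 x = ψ x := fun ψ hψ =>
    ⟨⟨⟨fun x => ψ x, (continuous_of_mem hα hψ).comp continuous_subtype_val⟩, ψ, hψ, fun _ => rfl⟩,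
      fun _ => rfl⟩
  have : Nonempty S := ⟨(hmem _ (zero_mem_Calpha n α)).choose⟩
  choose φ hφ hφe using fun k : ℕ => (TopologicalSpace.denseSeq S k).2
  refine ⟨φ, hφ, fun ψ hψ δ hδ => ?_⟩
  obtain ⟨g, hg⟩ := hmem ψ hψ
  obtain ⟨k, hk⟩ := (Metric.denseRange_iff.1 (TopologicalSpace.denseRange_denseSeq S)) g δ hδ
  refine ⟨k, fun x => ?_⟩
  by_cases hx : ‖x‖ ≤ 1
  · have hxK : x ∈ K := by simpa [K] using hx
    have h1 := ContinuousMap.dist_apply_le_dist (f := g.1) (g := (TopologicalSpace.denseSeq S k).1)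
      ⟨x, hxK⟩
    rw [hg, hφe, Real.dist_eq] at h1
    exact h1.trans hk.le
  · push Not at hx
    rw [hψ.1 x hx, (hφ k).1 x hx]
    simpa using hδ.le

/-- `A_α` is a supremum over a countable family, hence measurable. -/
lemma ofReal_Aalpha {n : ℕ} (hn : 0 < n) {α : ℝ} (hα : 0 < α) (hα1 : α ≤ 1)
    {Φ : ℕ → Rn n → ℝ} (hΦ : ∀ k, Φ k ∈ Calpha n α)
    (hd : ∀ ψ ∈ Calpha n α, ∀ δ > 0, ∃ k, ∀ x, |ψ x - Φ k x| ≤ δ)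
    {f : Rn n → ℝ} (hf : LocallyIntegrable f volume) {q : Rn n × ℝ} (hq : 0 < q.2) :
    ENNReal.ofReal (Aalpha α f q.1 q.2) = ⨆ k, ‖conv (Φ k) f q‖ₑ := by
  set J := ∫ z in closedBall q.1 q.2, |f z| with hJ
  have hJ0 : 0 ≤ J := integral_nonneg fun _ => abs_nonneg _
  set M := 3 * (q.2 ^ n)⁻¹ * J with hM
  have hM0 : 0 ≤ M := by positivity
  have hinner : ∀ φ : Rn n → ℝ, (⨆ _ : φ ∈ Calpha n α, |conv φ f q|) ≤ M := fun φ =>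
    Real.iSup_le (fun h => abs_conv_le hn hα hα1 h hq hf) hM0
  have hA : Aalpha α f q.1 q.2 = ⨆ φ, ⨆ _ : φ ∈ Calpha n α, |conv φ f q| := rfl
  have hbdd : BddAbove (range fun φ : Rn n → ℝ => ⨆ _ : φ ∈ Calpha n α, |conv φ f q|) :=
    ⟨M, by rintro _ ⟨φ, rfl⟩; exact hinner φ⟩
  have hlow : ∀ φ ∈ Calpha n α, |conv φ f q| ≤ Aalpha α f q.1 q.2 := by
    intro φ hφ
    rw [hA]
    refine le_trans ?_ (le_ciSup hbdd φ)
    simp [hφ]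
  have hΦe : ∀ k, ‖conv (Φ k) f q‖ₑ = ENNReal.ofReal |conv (Φ k) f q| := fun k => by
    rw [← Real.norm_eq_abs, ofReal_norm]
  simp_rw [hΦe]
  apply le_antisymm
  · set m := ⨆ k, ENNReal.ofReal |conv (Φ k) f q| with hm
    have hmM : m ≤ ENNReal.ofReal M := iSup_le fun k =>
      ENNReal.ofReal_le_ofReal (abs_conv_le hn hα hα1 (hΦ k) hq hf)
    have hmt : m ≠ ∞ := (hmM.trans_lt ENNReal.ofReal_lt_top).ne
    rw [← ENNReal.ofReal_toReal hmt]
    apply ENNReal.ofReal_le_ofReal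
    have hk : ∀ k, |conv (Φ k) f q| ≤ m.toReal := fun k =>
      (ENNReal.ofReal_le_iff_le_toReal hmt).1 (le_iSup (fun k => ENNReal.ofReal |conv (Φ k) f q|) k)
    rw [hA]
    refine Real.iSup_le (fun ψ => Real.iSup_le (fun hψ => ?_) ENNReal.toReal_nonneg)
      ENNReal.toReal_nonneg
    apply le_of_forall_pos_le_add
    intro ε hε
    obtain ⟨k, hk'⟩ := hd ψ hψ (ε / ((q.2 ^ n)⁻¹ * J + 1)) (by positivity)
    have hsub : conv ψ f q - conv (Φ k) f q = ∫ z, (ker ψ q z - ker (Φ k) q z) * f z := by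
      rw [conv, conv, ← integral_sub (integrable_ker_mul hn hα hα1 hψ hq hf)
        (integrable_ker_mul hn hα hα1 (hΦ k) hq hf)]
      simp_rw [sub_mul]
    set δ := ε / ((q.2 ^ n)⁻¹ * J + 1) with hδ
    have hdiff : |conv ψ f q - conv (Φ k) f q| ≤ (q.2 ^ n)⁻¹ * δ * J := by
      rw [hsub, hJ, ← integral_const_mul, ← integral_indicator measurableSet_closedBall,
        ← Real.norm_eq_abs]
      refine norm_integral_le_of_norm_le (integrable_indicator_ball hf q _)
        (Filter.Eventually.of_forall fun z => ?_)
      by_cases hz : z ∈ closedBall q.1 q.2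
      · rw [indicator_of_mem hz, norm_mul, Real.norm_eq_abs, Real.norm_eq_abs]
        gcongr
        have h0 : 0 < (q.2 ^ n)⁻¹ := by positivity
        rw [ker, ker, ← mul_sub, abs_mul, abs_of_pos h0]
        gcongr
        exact hk' _
      · have hz' : q.2 < dist z q.1 := by simpa using hz
        rw [indicator_of_notMem hz, ker_eq_zero hψ hq hz', ker_eq_zero (hΦ k) hq hz']
        simp
    have hε' : (q.2 ^ n)⁻¹ * δ * J ≤ ε := by
      rw [hδ, show (q.2 ^ n)⁻¹ * (ε / ((q.2 ^ n)⁻¹ * J + 1)) * J =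
        ε * (((q.2 ^ n)⁻¹ * J) / ((q.2 ^ n)⁻¹ * J + 1)) by ring]
      refine mul_le_of_le_one_right hε.le ?_
      rw [div_le_one (by positivity)]
      linarith
    have := abs_sub_abs_le_abs_sub (conv ψ f q) (conv (Φ k) f q)
    linarith [hk k]
  · exact iSup_le fun k => ENNReal.ofReal_le_ofReal (hlow _ (hΦ k))

/-! ### A `T T*` estimate -/

lemma ennreal_mul_le_sq_add_sq (a b : ℝ≥0∞) : a * b ≤ a ^ 2 + b ^ 2 := by
  rcases le_total a b with h | h
  · calc a * b ≤ b * b := by gcongr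
      _ = b ^ 2 := (sq b).symm
      _ ≤ _ := le_add_self
  · calc a * b ≤ a * a := by gcongr
      _ = a ^ 2 := (sq a).symm
      _ ≤ _ := le_self_add

lemma measurable_uncurry_flip {X Y Z : Type*} [MeasurableSpace X] [MeasurableSpace Y]
    [MeasurableSpace Z] {F : X → Y → Z} (hF : Measurable (Function.uncurry F)) :
    Measurable (Function.uncurry fun y x => F x y) :=
  hF.comp measurable_swap

section TT

variable {n : ℕ} {Q : Type*} [MeasurableSpace Q] {ν : Measure Q} [IsFiniteMeasure ν]

lemma integrable_prod_of_le {F : Rn n → Q → ℝ} (hF : Measurable (Function.uncurry F)) {c : ℝ}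
    {e : Rn n → ℝ} (he : Integrable e volume) (hle : ∀ z q, |F z q| ≤ e z * c) :
    Integrable (Function.uncurry F) (volume.prod ν) :=
  (he.mul_prod (integrable_const (μ := ν) c)).mono' hF.aestronglyMeasurable
    (Filter.Eventually.of_forall fun w => hle w.1 w.2)

lemma abs_integral_le_mul {u : Q → ℝ} {c : ℝ} (hu : ∀ q, |u q| ≤ c) :
    |∫ q, u q ∂ν| ≤ c * ν.real univ := by
  rw [← Real.norm_eq_abs]
  exact norm_integral_le_of_norm_le_const (Filter.Eventually.of_forall hu)

/-- If `g = T* h` for a bounded kernel `k`, then `‖g‖₂² ≤ 2 C₀ ‖h‖₂²` as soon as the kernel of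
`T T*` satisfies Schur's condition with the constant `C₀`. -/
lemma schur_TT {k : Q → Rn n → ℝ} (hk : Measurable fun w : Q × Rn n => k w.1 w.2)
    {b : Rn n → ℝ} (hb : Integrable b volume) {B : ℝ} (hb0 : ∀ z, 0 ≤ b z) (hbB : ∀ z, b z ≤ B)
    (hkb : ∀ q z, |k q z| ≤ b z) {h : Q → ℝ} (hh : Measurable h) {Bh : ℝ} (hBh : 0 ≤ Bh)
    (hhB : ∀ q, |h q| ≤ Bh)
    {C₀ : ℝ≥0∞} (hC : ∀ q, ∫⁻ q', ‖∫ z, k q z * k q' z‖ₑ ∂ν ≤ C₀) :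
    ∫⁻ z, ‖∫ q, k q z * h q ∂ν‖ₑ ^ 2 ≤ 2 * C₀ * ∫⁻ q, ‖h q‖ₑ ^ 2 ∂ν := by
  have hkm : Measurable fun w : Rn n × Q => k w.2 w.1 := hk.comp measurable_swap
  have hkz : ∀ q, Measurable (k q) := fun q => hk.comp measurable_prodMk_left
  set g : Rn n → ℝ := fun z => ∫ q, k q z * h q ∂ν with hg
  have hgm : Measurable g := by
    have : StronglyMeasurable (Function.uncurry fun (z : Rn n) (q : Q) => k q z * h q) :=
      (hkm.mul (hh.comp measurable_snd)).stronglyMeasurable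
    exact this.integral_prod_right.measurable
  set V := ν.real univ with hV
  have hV0 : 0 ≤ V := measureReal_nonneg
  have hgb : ∀ z, |g z| ≤ b z * Bh * V := fun z => abs_integral_le_mul fun q => by
    rw [abs_mul]
    exact mul_le_mul (hkb q z) (hhB q) (abs_nonneg _) (hb0 z)
  have hgB : ∀ z, |g z| ≤ B * Bh * V := fun z => (hgb z).trans (by gcongr; exact hbB z)
  have hB0 : 0 ≤ B := (hb0 0).trans (hbB 0)
  set K : Q → Q → ℝ := fun q q' => ∫ z, k q z * k q' z with hK
  have hKm : Measurable (Function.uncurry K) := by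
    have : StronglyMeasurable (Function.uncurry fun (w : Q × Q) (z : Rn n) => k w.1 z * k w.2 z) := by
      apply Measurable.stronglyMeasurable
      exact (hk.comp (f := fun w : (Q × Q) × Rn n => (w.1.1, w.2)) (by fun_prop)).mul
        (hk.comp (f := fun w : (Q × Q) × Rn n => (w.1.2, w.2)) (by fun_prop))
    exact this.integral_prod_right.measurable
  have hKsymm : ∀ q q', K q q' = K q' q := fun q q' => by simp [hK, mul_comm]
  have e1 : ∫⁻ z, ‖g z‖ₑ ^ 2 ≤ ‖∫ z, g z * g z‖ₑ := by
    have h_int : Integrable (fun z => g z * g z) volume := by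
      refine (hb.mul_const (Bh * V * (B * Bh * V))).mono' (hgm.mul hgm).aestronglyMeasurable
        (Filter.Eventually.of_forall fun z => ?_)
      rw [norm_mul]
      calc |g z| * |g z| ≤ (b z * Bh * V) * (B * Bh * V) :=
            mul_le_mul (hgb z) (hgB z) (abs_nonneg _) ((abs_nonneg _).trans (hgb z))
        _ = _ := by ring
    have : ∀ z, ‖g z‖ₑ ^ 2 = ENNReal.ofReal (g z * g z) := fun z => by
      rw [← ofReal_norm, ← ENNReal.ofReal_pow (norm_nonneg _), Real.norm_eq_abs, sq_abs, sq]
    simp_rw [this]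
    rw [← ofReal_integral_eq_lintegral_ofReal h_int
      (Filter.Eventually.of_forall fun z => mul_self_nonneg _), ← ofReal_norm]
    exact ENNReal.ofReal_le_ofReal (le_abs_self _)
  have e2 : ∫ z, g z * g z = ∫ q, h q * ∫ z, k q z * g z ∂volume ∂ν := by
    calc ∫ z, g z * g z = ∫ z, ∫ q, g z * (k q z * h q) ∂ν := by
          simp_rw [integral_const_mul]
          rfl
      _ = ∫ q, ∫ z, g z * (k q z * h q) ∂volume ∂ν := by
          refine integral_integral_swap (integrable_prod_of_le ?_ (hb.const_mul (B * Bh * V)) (c := Bh)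
            fun z q => ?_)
          · exact (hgm.comp measurable_fst).mul (hkm.mul (hh.comp measurable_snd))
          · rw [abs_mul, abs_mul, ← mul_assoc]
            exact mul_le_mul (mul_le_mul (hgB z) (hkb q z) (abs_nonneg _) (by positivity)) (hhB q)
              (abs_nonneg _) (mul_nonneg (by positivity) (hb0 z))
      _ = _ := by
          refine integral_congr_ae (Filter.Eventually.of_forall fun q => ?_)
          simp only
          rw [← integral_const_mul]
          congr 1
          ext z
          ring
  have e3 : ∀ q, ∫ z, k q z * g z = ∫ q', h q' * K q q' ∂ν := by
    intro q
    calc ∫ z, k q z * g z = ∫ z, ∫ q', k q z * (k q' z * h q') ∂ν := by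
          simp_rw [integral_const_mul]
          rfl
      _ = ∫ q', ∫ z, k q z * (k q' z * h q') ∂volume ∂ν := by
          refine integral_integral_swap (integrable_prod_of_le ?_ (hb.const_mul B) (c := Bh)
            fun z q' => ?_)
          · exact ((hkz q).comp measurable_fst).mul (hkm.mul (hh.comp measurable_snd))
          · rw [abs_mul, abs_mul, ← mul_assoc]
            exact mul_le_mul (mul_le_mul ((hkb q z).trans (hbB z)) (hkb q' z) (abs_nonneg _)
              (by positivity)) (hhB q') (abs_nonneg _) (mul_nonneg (by positivity) (hb0 z))
      _ = _ := by
          refine integral_congr_ae (Filter.Eventually.of_forall fun q' => ?_)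
          simp only [hK]
          rw [← integral_const_mul]
          congr 1
          ext z
          ring
  have hh2 : Measurable fun q => ‖h q‖ₑ ^ 2 := by fun_prop
  have hKe : Measurable fun w : Q × Q => ‖K w.1 w.2‖ₑ := hKm.enorm
  calc ∫⁻ z, ‖g z‖ₑ ^ 2 ≤ ‖∫ q, h q * ∫ q', h q' * K q q' ∂ν ∂ν‖ₑ := by
        refine e1.trans_eq ?_
        rw [e2]
        simp_rw [e3]
    _ ≤ ∫⁻ q, ∫⁻ q', (‖h q‖ₑ ^ 2 * ‖K q q'‖ₑ + ‖h q'‖ₑ ^ 2 * ‖K q q'‖ₑ) ∂ν ∂ν := by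
        refine (enorm_integral_le_lintegral_enorm _).trans (lintegral_mono fun q => ?_)
        simp only
        rw [enorm_mul]
        calc _ ≤ ‖h q‖ₑ * ∫⁻ q', ‖h q' * K q q'‖ₑ ∂ν := by
              gcongr
              exact enorm_integral_le_lintegral_enorm _
          _ = ∫⁻ q', ‖h q‖ₑ * ‖h q' * K q q'‖ₑ ∂ν := by
              rw [lintegral_const_mul' _ _ (by simp)]
          _ ≤ _ := by
              refine lintegral_mono fun q' => ?_
              simp only
              rw [enorm_mul, ← mul_assoc, ← add_mul]
              gcongr
              exact ennreal_mul_le_sq_add_sq _ _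
    _ = ∫⁻ q, ∫⁻ q', ‖h q‖ₑ ^ 2 * ‖K q q'‖ₑ ∂ν ∂ν + ∫⁻ q, ∫⁻ q', ‖h q'‖ₑ ^ 2 * ‖K q q'‖ₑ ∂ν ∂ν := by
        rw [← lintegral_add_left]
        · refine lintegral_congr fun q => ?_
          rw [lintegral_add_left]
          exact (hKe.comp measurable_prodMk_left).const_mul _
        · exact Measurable.lintegral_prod_right' (f := fun w : Q × Q => ‖h w.1‖ₑ ^ 2 * ‖K w.1 w.2‖ₑ)
            ((hh2.comp measurable_fst).mul hKe)
    _ = ∫⁻ q, ∫⁻ q', ‖h q‖ₑ ^ 2 * ‖K q q'‖ₑ ∂ν ∂ν + ∫⁻ q, ∫⁻ q', ‖h q‖ₑ ^ 2 * ‖K q q'‖ₑ ∂ν ∂ν := by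
        congr 1
        rw [lintegral_lintegral_swap]
        · simp_rw [hKsymm]
        · exact ((hh2.comp measurable_snd).mul hKe).aemeasurable
    _ ≤ ∫⁻ q, ‖h q‖ₑ ^ 2 * C₀ ∂ν + ∫⁻ q, ‖h q‖ₑ ^ 2 * C₀ ∂ν := by
        have : ∫⁻ q, ∫⁻ q', ‖h q‖ₑ ^ 2 * ‖K q q'‖ₑ ∂ν ∂ν ≤ ∫⁻ q, ‖h q‖ₑ ^ 2 * C₀ ∂ν := by
          refine lintegral_mono fun q => ?_
          simp only
          rw [lintegral_const_mul' _ _ (by simp)]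
          gcongr
          exact hC q
        gcongr
    _ = _ := by
        rw [lintegral_mul_const _ hh2]
        ring

/-- The density obtained from `|f|` by spreading the mass `|f w| dw` at `w` uniformly over the ball
`B(w, r w)`. -/
def spread (r : Rn n → ℝ) (f : Rn n → ℝ) (z : Rn n) : ℝ≥0∞ :=
  ∫⁻ w, (ball w (r w)).indicator (fun _ => ‖f w‖ₑ * (volume (ball w (r w)))⁻¹) z

set_option maxHeartbeats 400000 in
/-- Bound for `‖T f‖₂²` when `T* (T f)` varies little over the balls `B(w, r w)` and `|f|`, spread
over these balls, is bounded.  One writes `‖T f‖₂² = ⟨f, T* T f⟩` and replaces `T* T f` by its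
averages over the balls; the averages are paired with the spread of `|f|`, which is in `L²`,
and the result is absorbed thanks to `schur_TT`. -/
lemma lintegral_sq_le_of_TT (hn : 0 < n) {k : Q → Rn n → ℝ}
    (hk : Measurable fun w : Q × Rn n => k w.1 w.2)
    {b : Rn n → ℝ} (hb : Integrable b volume) {B : ℝ} (hb0 : ∀ z, 0 ≤ b z) (hbB : ∀ z, b z ≤ B)
    (hkb : ∀ q z, |k q z| ≤ b z) {f : Rn n → ℝ} (hfm : Measurable f) (hf : Integrable f volume)
    {r : Rn n → ℝ} (hr : Measurable r) (hr0 : ∀ w, 0 < r w)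
    {C₀ : ℝ≥0∞} (hC0 : C₀ ≠ 0) (hCt : C₀ ≠ ∞)
    (hC : ∀ q, ∫⁻ q', ‖∫ z, k q z * k q' z‖ₑ ∂ν ≤ C₀)
    {E : ℝ≥0∞} (hE : ∀ w z, z ∈ ball w (r w) →
      ∫⁻ q, ‖∫ x, k q x * f x‖ₑ * ‖k q w - k q z‖ₑ ∂ν ≤ E)
    {Λ : ℝ≥0∞} (hΛ : ∀ z, spread r f z ≤ Λ) :
    ∫⁻ q, ‖∫ z, k q z * f z‖ₑ ^ 2 ∂ν ≤ 2 * ((E + 4 * C₀ * Λ) * ∫⁻ z, ‖f z‖ₑ) := by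
  set h : Q → ℝ := fun q => ∫ z, k q z * f z with hh
  have hkm : Measurable fun w : Rn n × Q => k w.2 w.1 := hk.comp measurable_swap
  have hkq : ∀ z, Measurable fun q => k q z := fun z => hk.comp measurable_prodMk_right
  have hhm : Measurable h := by
    have : StronglyMeasurable (Function.uncurry fun (q : Q) (z : Rn n) => k q z * f z) :=
      (hk.mul (hfm.comp measurable_snd)).stronglyMeasurable
    exact this.integral_prod_right.measurable
  have hB0 : 0 ≤ B := (hb0 0).trans (hbB 0)
  set Bh := ∫ z, B * ‖f z‖ with hBh
  have hBh0 : 0 ≤ Bh := integral_nonneg fun z => by positivity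
  have hhB : ∀ q, |h q| ≤ Bh := fun q => by
    rw [hh, ← Real.norm_eq_abs]
    refine norm_integral_le_of_norm_le (hf.norm.const_mul B) (Filter.Eventually.of_forall fun z => ?_)
    rw [norm_mul]
    gcongr
    exact (hkb q z).trans (hbB z)
  set g : Rn n → ℝ := fun z => ∫ q, k q z * h q ∂ν with hg
  have hgm : Measurable g := by
    have : StronglyMeasurable (Function.uncurry fun (z : Rn n) (q : Q) => k q z * h q) :=
      (hkm.mul (hhm.comp measurable_snd)).stronglyMeasurable
    exact this.integral_prod_right.measurable
  have hschur := schur_TT hk hb hb0 hbB hkb hhm hBh0 hhB hC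
  set H := ∫⁻ q, ‖h q‖ₑ ^ 2 ∂ν with hH
  have hhB' : ∀ q, ‖h q‖ₑ ^ 2 ≤ ENNReal.ofReal Bh ^ 2 := fun q => by
    rw [← ofReal_norm]
    gcongr
    exact hhB q
  have hHt : H ≠ ∞ := by
    refine ((lintegral_mono hhB').trans_lt ?_).ne
    rw [lintegral_const]
    exact ENNReal.mul_lt_top (by simp) (measure_lt_top _ _)
  -- duality
  have e1 : H ≤ ∫⁻ z, ‖f z‖ₑ * ‖g z‖ₑ := by
    have h_int : Integrable (fun q => h q * h q) ν := by
      refine Integrable.of_bound (hhm.mul hhm).aestronglyMeasurable (Bh * Bh)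
        (Filter.Eventually.of_forall fun q => ?_)
      rw [norm_mul]
      exact mul_le_mul (hhB q) (hhB q) (abs_nonneg _) hBh0
    have h1 : H = ENNReal.ofReal (∫ q, h q * h q ∂ν) := by
      rw [ofReal_integral_eq_lintegral_ofReal h_int
        (Filter.Eventually.of_forall fun z => mul_self_nonneg _)]
      refine lintegral_congr fun q => ?_
      rw [← ofReal_norm, ← ENNReal.ofReal_pow (norm_nonneg _), Real.norm_eq_abs, sq_abs, sq]
    have h2 : ∫ q, h q * h q ∂ν = ∫ z, f z * g z := by
      calc ∫ q, h q * h q ∂ν = ∫ q, ∫ z, h q * (k q z * f z) ∂volume ∂ν := by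
            simp_rw [integral_const_mul]
            rfl
        _ = ∫ z, ∫ q, h q * (k q z * f z) ∂ν := by
            symm
            refine integral_integral_swap (integrable_prod_of_le ?_ hf.norm (c := Bh * B)
              fun z q => ?_)
            · exact (hhm.comp measurable_snd).mul (hkm.mul (hfm.comp measurable_fst))
            · rw [abs_mul, abs_mul, ← mul_assoc, mul_comm ‖f z‖]
              refine mul_le_mul (mul_le_mul (hhB q) ((hkb q z).trans (hbB z)) (abs_nonneg _) hBh0)
                le_rfl (abs_nonneg _) (by positivity)
        _ = _ := by
            refine integral_congr_ae (Filter.Eventually.of_forall fun z => ?_)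
            simp only [hg]
            rw [← integral_const_mul]
            congr 1
            ext q
            ring
    rw [h1, h2]
    calc _ ≤ ‖∫ z, f z * g z‖ₑ := by
          rw [← ofReal_norm]
          exact ENNReal.ofReal_le_ofReal (le_abs_self _)
      _ ≤ ∫⁻ z, ‖f z * g z‖ₑ := enorm_integral_le_lintegral_enorm _
      _ = _ := by simp_rw [enorm_mul]
  -- `T* h` varies by at most `E` on each of the balls
  have hosc : ∀ w z, z ∈ ball w (r w) → ‖g w‖ₑ ≤ E + ‖g z‖ₑ := by
    intro w z hz
    have hi : ∀ z, Integrable (fun q => k q z * h q) ν := fun z => by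
      refine Integrable.of_bound ((hkq z).mul hhm).aestronglyMeasurable (B * Bh)
        (Filter.Eventually.of_forall fun q => ?_)
      rw [norm_mul]
      exact mul_le_mul ((hkb q z).trans (hbB z)) (hhB q) (abs_nonneg _) hB0
    have : ‖g w - g z‖ₑ ≤ E := by
      simp only [hg]
      rw [← integral_sub (hi w) (hi z)]
      refine (enorm_integral_le_lintegral_enorm _).trans ((lintegral_mono fun q => ?_).trans (hE w z hz))
      simp only
      rw [← sub_mul, enorm_mul, mul_comm]
    calc ‖g w‖ₑ = ‖(g w - g z) + g z‖ₑ := by rw [sub_add_cancel]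
      _ ≤ ‖g w - g z‖ₑ + ‖g z‖ₑ := enorm_add_le _ _
      _ ≤ _ := by gcongr
  have hvol : ∀ w, volume (ball w (r w)) ≠ 0 := fun w => (measure_ball_pos volume _ (hr0 w)).ne'
  have hvolt : ∀ w : Rn n, volume (ball w (r w)) ≠ ∞ := fun w => measure_ball_lt_top.ne
  have hvm : Measurable fun w => volume (ball w (r w)) := by
    have : (fun w => volume (ball w (r w))) =
        fun w => ENNReal.ofReal (r w ^ n) * volume (ball (0 : Rn n) 1) :=
      funext fun w => volume_ball_eq hn w (hr0 w).le
    rw [this]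
    fun_prop
  have havg : ∀ w, ‖g w‖ₑ ≤ E + ∫⁻ z, (ball w (r w)).indicator
      (fun _ => (volume (ball w (r w)))⁻¹) z * ‖g z‖ₑ := by
    intro w
    have h1 : ∫⁻ z, (ball w (r w)).indicator
      (fun _ => (volume (ball w (r w)))⁻¹) z * ‖g z‖ₑ =
        (volume (ball w (r w)))⁻¹ * ∫⁻ z in ball w (r w), ‖g z‖ₑ := by
      rw [← lintegral_const_mul _ hgm.enorm, ← lintegral_indicator measurableSet_ball]
      refine lintegral_congr fun z => ?_
      by_cases hz : z ∈ ball w (r w)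
      · rw [indicator_of_mem hz, indicator_of_mem hz]
      · rw [indicator_of_notMem hz, indicator_of_notMem hz, zero_mul]
    have h2 : volume (ball w (r w)) * ‖g w‖ₑ ≤
        volume (ball w (r w)) * E + ∫⁻ z in ball w (r w), ‖g z‖ₑ := by
      calc volume (ball w (r w)) * ‖g w‖ₑ = ∫⁻ z in ball w (r w), ‖g w‖ₑ := by
            rw [setLIntegral_const, mul_comm]
        _ ≤ ∫⁻ z in ball w (r w), (E + ‖g z‖ₑ) :=
            setLIntegral_mono_ae' measurableSet_ball (Filter.Eventually.of_forall (hosc w))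
        _ = _ := by rw [lintegral_add_right _ hgm.enorm, setLIntegral_const, mul_comm]
    rw [h1, ← ENNReal.mul_le_mul_iff_right (hvol w) (hvolt w), mul_add, ← mul_assoc _ _⁻¹,
      ENNReal.mul_inv_cancel (hvol w) (hvolt w), one_mul]
    exact h2
  have hWm : Measurable (Function.uncurry fun w z : Rn n =>
      (ball w (r w)).indicator (fun _ => ‖f w‖ₑ * (volume (ball w (r w)))⁻¹) z) := by
    have hS : MeasurableSet {p : Rn n × Rn n | dist p.2 p.1 < r p.1} :=
      measurableSet_lt (f := fun p : Rn n × Rn n => dist p.2 p.1) (g := fun p => r p.1)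
        (by fun_prop) (by fun_prop)
    exact ((hfm.enorm.mul hvm.inv).comp measurable_fst).indicator hS
  have hsm : Measurable (spread r f) := Measurable.lintegral_prod_left' hWm
  have hs1 : ∫⁻ z, spread r f z ≤ ∫⁻ w, ‖f w‖ₑ := by
    have hsw : Measurable (Function.uncurry fun z w : Rn n =>
        (ball w (r w)).indicator (fun _ => ‖f w‖ₑ * (volume (ball w (r w)))⁻¹) z) :=
      measurable_uncurry_flip hWm
    simp only [spread]
    rw [lintegral_lintegral_swap hsw.aemeasurable]
    refine lintegral_mono fun w => ?_
    simp only
    rw [lintegral_indicator measurableSet_ball, setLIntegral_const, mul_assoc,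
      ENNReal.inv_mul_cancel (hvol w) (hvolt w), mul_one]
  have e2 : ∫⁻ w, ‖f w‖ₑ * ‖g w‖ₑ ≤ E * (∫⁻ w, ‖f w‖ₑ) + ∫⁻ z, ‖g z‖ₑ * spread r f z := by
    calc _ ≤ ∫⁻ w, (E * ‖f w‖ₑ + ∫⁻ z, (ball w (r w)).indicator
            (fun _ => ‖f w‖ₑ * (volume (ball w (r w)))⁻¹) z * ‖g z‖ₑ) := by
          refine lintegral_mono fun w => ?_
          simp only
          refine (mul_le_mul_right (havg w) _).trans_eq ?_
          rw [mul_add, mul_comm _ E, ← lintegral_const_mul' _ _ (by simp)]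
          congr 1
          refine lintegral_congr fun z => ?_
          by_cases hz : z ∈ ball w (r w)
          · rw [indicator_of_mem hz, indicator_of_mem hz, mul_assoc]
          · rw [indicator_of_notMem hz, indicator_of_notMem hz, zero_mul, mul_zero]
      _ = E * (∫⁻ w, ‖f w‖ₑ) + ∫⁻ z, ∫⁻ w, (ball w (r w)).indicator
            (fun _ => ‖f w‖ₑ * (volume (ball w (r w)))⁻¹) z * ‖g z‖ₑ := by
          rw [lintegral_add_left (hfm.enorm.const_mul E), lintegral_const_mul _ hfm.enorm,
            lintegral_lintegral_swap]
          exact (hWm.mul (hgm.enorm.comp measurable_snd)).aemeasurable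
      _ = _ := by
          congr 1
          refine lintegral_congr fun z => ?_
          rw [lintegral_mul_const' _ _ (by simp), mul_comm]
          rfl
  -- weighted Young inequality, the weight being dictated by `schur_TT`
  set D := 4 * C₀ with hD
  have hD0 : D ≠ 0 := mul_ne_zero (by simp) hC0
  have hDt : D ≠ ∞ := ENNReal.mul_ne_top (by simp) hCt
  have e3 : ∫⁻ z, ‖g z‖ₑ * spread r f z ≤ D⁻¹ * (2 * C₀ * H) + D * (Λ * ∫⁻ w, ‖f w‖ₑ) := by
    calc _ ≤ ∫⁻ z, (D⁻¹ * ‖g z‖ₑ ^ 2 + D * (Λ * spread r f z)) := by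
          refine lintegral_mono fun z => ?_
          simp only
          have hy : ‖g z‖ₑ * spread r f z ≤ D⁻¹ * ‖g z‖ₑ ^ 2 + D * (spread r f z) ^ 2 := by
            rw [← ENNReal.mul_le_mul_iff_right hD0 hDt, mul_add, ← mul_assoc D D⁻¹,
              ENNReal.mul_inv_cancel hD0 hDt, one_mul]
            calc D * (‖g z‖ₑ * spread r f z) = ‖g z‖ₑ * (D * spread r f z) := by ring
              _ ≤ ‖g z‖ₑ ^ 2 + (D * spread r f z) ^ 2 := ennreal_mul_le_sq_add_sq _ _
              _ = _ := by ring
          refine hy.trans ?_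
          rw [sq (spread r f z)]
          gcongr
          exact hΛ z
      _ = D⁻¹ * (∫⁻ z, ‖g z‖ₑ ^ 2) + D * ∫⁻ z, Λ * spread r f z := by
          rw [lintegral_add_left ((hgm.enorm.pow_const 2).const_mul _),
            lintegral_const_mul _ (hgm.enorm.pow_const 2), lintegral_const_mul _ (hsm.const_mul Λ)]
      _ ≤ _ := by
          rw [lintegral_const_mul _ hsm]
          gcongr
  have e4 : D⁻¹ * (2 * C₀ * H) = H / 2 := by
    have h42 : D = 2 * (2 * C₀) := by rw [hD]; ring
    rw [h42, ENNReal.mul_inv (Or.inl (by simp)) (Or.inl (by simp)), mul_assoc, ← mul_assoc (2 * C₀)⁻¹,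
      ENNReal.inv_mul_cancel (mul_ne_zero (by simp) hC0) (ENNReal.mul_ne_top (by simp) hCt), one_mul,
      ENNReal.div_eq_inv_mul]
  set X := (E + D * Λ) * ∫⁻ z, ‖f z‖ₑ with hX
  have hfinal : H ≤ X + H / 2 := by
    calc H ≤ E * (∫⁻ w, ‖f w‖ₑ) + (D⁻¹ * (2 * C₀ * H) + D * (Λ * ∫⁻ w, ‖f w‖ₑ)) :=
          e1.trans (e2.trans (by gcongr))
      _ = X + H / 2 := by rw [e4, hX]; ring
  have hhalf : H / 2 ≤ X := by
    have h2t : H / 2 ≠ ∞ := ENNReal.div_ne_top hHt (by simp)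
    rw [← ENNReal.add_le_add_iff_right h2t, ENNReal.add_halves]
    exact hfinal
  calc H = 2 * (H / 2) := by rw [two_mul, ENNReal.add_halves]
    _ ≤ _ := by gcongr

end TT

/-! ### Two kernel integrals over the half-space -/

lemma volume_closedBall_eq {n : ℕ} (hn : 0 < n) (x : Rn n) {r : ℝ} (hr : 0 ≤ r) :
    volume (closedBall x r) = ENNReal.ofReal (r ^ n) * volume (ball (0 : Rn n) 1) := by
  have : Nonempty (Fin n) := ⟨⟨0, hn⟩⟩
  simpa using Measure.addHaar_closedBall (volume : Measure (Rn n)) x hr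

lemma lintegral_slices {n : ℕ} {φ : ℝ → ℝ≥0∞} (hφ : Measurable φ) {ρ : ℝ → ℝ} (hρ : Measurable ρ)
    (w : Rn n) :
    ∫⁻ q : Rn n × ℝ, {q : Rn n × ℝ | dist q.1 w ≤ ρ q.2}.indicator (fun q => φ q.2) q =
      ∫⁻ t, φ t * volume (closedBall w (ρ t)) := by
  have hS : MeasurableSet {q : Rn n × ℝ | dist q.1 w ≤ ρ q.2} :=
    measurableSet_le (f := fun q : Rn n × ℝ => dist q.1 w) (g := fun q => ρ q.2)
      (by fun_prop) (by fun_prop)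
  have hm : Measurable ({q : Rn n × ℝ | dist q.1 w ≤ ρ q.2}.indicator (fun q => φ q.2)) :=
    (hφ.comp measurable_snd).indicator hS
  rw [Measure.volume_eq_prod, lintegral_prod_symm _ hm.aemeasurable]
  refine lintegral_congr fun t => ?_
  have : ∀ y, {q : Rn n × ℝ | dist q.1 w ≤ ρ q.2}.indicator (fun q => φ q.2) (y, t) =
      (closedBall w (ρ t)).indicator (fun _ => φ t) y := fun y => rfl
  simp_rw [this]
  rw [lintegral_indicator measurableSet_closedBall, setLIntegral_const]

/-- At large scales the decay `(r / t) ^ α` makes the integral over the cone with vertex `w` for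
`dy dt / t` converge, uniformly in `r`. -/
lemma exists_large_scale_bound {n : ℕ} (hn : 0 < n) {α : ℝ} (hα : 0 < α) :
    ∃ C : ℝ≥0∞, C ≠ ∞ ∧ ∀ r : ℝ, 0 < r → ∀ w : Rn n,
      ∫⁻ q : Rn n × ℝ, {q : Rn n × ℝ | 0 < q.2 ∧ r ≤ 3 * q.2 ∧ dist q.1 w ≤ 4 * q.2}.indicator
        (fun q => ENNReal.ofReal ((q.2 ^ n)⁻¹ * (r / q.2) ^ α * q.2⁻¹)) q ≤ C := by
  refine ⟨ENNReal.ofReal (4 ^ n * 4 ^ α / α) * volume (ball (0 : Rn n) 1),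
    ENNReal.mul_ne_top (by simp) measure_ball_lt_top.ne, fun r hr w => ?_⟩
  set c : ℝ → ℝ≥0∞ := fun t => ENNReal.ofReal ((t ^ n)⁻¹ * (r / t) ^ α * t⁻¹) with hc
  have hcm : Measurable c := by simp only [hc]; fun_prop
  have h4 : 0 < r / 4 := by positivity
  calc _ ≤ ∫⁻ q : Rn n × ℝ, {q : Rn n × ℝ | dist q.1 w ≤ 4 * q.2}.indicator
        (fun q => (Ioi (r / 4)).indicator c q.2) q := by
        refine lintegral_mono fun q => ?_
        refine indicator_le (fun q hq => ?_) q
        have h1 : q.2 ∈ Ioi (r / 4) := by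
          have h0 := hq.1
          have := hq.2.1
          rw [mem_Ioi]; linarith
        rw [indicator_of_mem (show q ∈ {q : Rn n × ℝ | dist q.1 w ≤ 4 * q.2} from hq.2.2),
          indicator_of_mem h1]
    _ = ∫⁻ t, (Ioi (r / 4)).indicator c t * volume (closedBall w (4 * t)) :=
        lintegral_slices (ρ := fun t => 4 * t) (hcm.indicator measurableSet_Ioi) (by fun_prop) w
    _ = ∫⁻ t in Ioi (r / 4), ENNReal.ofReal (4 ^ n * r ^ α * t ^ (-α - 1)) *
          volume (ball (0 : Rn n) 1) := by
        rw [← lintegral_indicator measurableSet_Ioi]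
        refine lintegral_congr fun t => ?_
        by_cases ht : t ∈ Ioi (r / 4)
        · rw [indicator_of_mem ht, indicator_of_mem ht]
          have ht0 : 0 < t := h4.trans ht
          rw [volume_closedBall_eq hn w (by positivity), ← mul_assoc, hc,
            ← ENNReal.ofReal_mul (by positivity)]
          congr 2
          rw [Real.div_rpow hr.le ht0.le, Real.rpow_sub ht0, Real.rpow_neg ht0.le, Real.rpow_one]
          field_simp
          ring
        · rw [indicator_of_notMem ht, indicator_of_notMem ht, zero_mul]
    _ = ENNReal.ofReal (4 ^ n * 4 ^ α / α) * volume (ball (0 : Rn n) 1) := by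
        rw [lintegral_mul_const _ (by fun_prop)]
        congr 1
        rw [← ofReal_integral_eq_lintegral_ofReal]
        · rw [integral_const_mul, integral_Ioi_rpow_of_lt (by linarith) h4]
          congr 1
          rw [sub_add_cancel, Real.div_rpow hr.le (by norm_num), Real.rpow_neg hr.le,
            Real.rpow_neg (by norm_num)]
          have : 0 < r ^ α := by positivity
          field_simp
        · exact (integrableOn_Ioi_rpow_of_lt (by linarith) h4).const_mul _
        · filter_upwards [ae_restrict_mem measurableSet_Ioi] with t ht
          have ht0 : 0 < t := h4.trans ht
          simp only [Pi.zero_apply]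
          positivity

/-- The counterpart for scales `t ≤ T`, where the decay is `(t / T) ^ α`. -/
lemma exists_small_scale_bound {n : ℕ} (hn : 0 < n) {α : ℝ} (hα : 0 < α) :
    ∃ C : ℝ≥0∞, C ≠ ∞ ∧ ∀ T : ℝ, 0 < T → ∀ w : Rn n,
      ∫⁻ q : Rn n × ℝ, {q : Rn n × ℝ | 0 < q.2 ∧ q.2 ≤ T ∧ dist q.1 w ≤ 2 * T}.indicator
        (fun q => ENNReal.ofReal ((T ^ n)⁻¹ * (q.2 / T) ^ α * q.2⁻¹)) q ≤ C := by
  refine ⟨ENNReal.ofReal (2 ^ n / α) * volume (ball (0 : Rn n) 1),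
    ENNReal.mul_ne_top (by simp) measure_ball_lt_top.ne, fun T hT w => ?_⟩
  set c : ℝ → ℝ≥0∞ := fun t => ENNReal.ofReal ((T ^ n)⁻¹ * (t / T) ^ α * t⁻¹) with hc
  have hcm : Measurable c := by simp only [hc]; fun_prop
  calc _ ≤ ∫⁻ q : Rn n × ℝ, {q : Rn n × ℝ | dist q.1 w ≤ 2 * T}.indicator
        (fun q => (Ioc 0 T).indicator c q.2) q := by
        refine lintegral_mono fun q => ?_
        refine indicator_le (fun q hq => ?_) q
        have h1 : q.2 ∈ Ioc 0 T := ⟨hq.1, hq.2.1⟩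
        rw [indicator_of_mem (show q ∈ {q : Rn n × ℝ | dist q.1 w ≤ 2 * T} from hq.2.2),
          indicator_of_mem h1]
    _ = ∫⁻ t, (Ioc 0 T).indicator c t * volume (closedBall w (2 * T)) :=
        lintegral_slices (ρ := fun t => 2 * T) (hcm.indicator measurableSet_Ioc) (by fun_prop) w
    _ = ∫⁻ t in Ioc 0 T, ENNReal.ofReal (2 ^ n * (T ^ α)⁻¹ * t ^ (α - 1)) *
          volume (ball (0 : Rn n) 1) := by
        rw [← lintegral_indicator measurableSet_Ioc]
        refine lintegral_congr fun t => ?_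
        by_cases ht : t ∈ Ioc 0 T
        · rw [indicator_of_mem ht, indicator_of_mem ht]
          have ht0 : 0 < t := ht.1
          rw [volume_closedBall_eq hn w (by positivity), ← mul_assoc, hc,
            ← ENNReal.ofReal_mul (by positivity)]
          congr 2
          rw [Real.div_rpow ht0.le hT.le, Real.rpow_sub ht0, Real.rpow_one]
          have : 0 < T ^ α := by positivity
          field_simp
          ring
        · rw [indicator_of_notMem ht, indicator_of_notMem ht, zero_mul]
    _ = ENNReal.ofReal (2 ^ n / α) * volume (ball (0 : Rn n) 1) := by
        rw [lintegral_mul_const _ (by fun_prop)]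
        congr 1
        rw [← ofReal_integral_eq_lintegral_ofReal]
        · rw [integral_const_mul, ← intervalIntegral.integral_of_le hT.le,
            integral_rpow (Or.inl (by linarith))]
          congr 1
          rw [sub_add_cancel, Real.zero_rpow hα.ne']
          have : 0 < T ^ α := by positivity
          field_simp
          ring
        · refine Integrable.const_mul ?_ _
          have := intervalIntegral.intervalIntegrable_rpow' (a := 0) (b := T) (r := α - 1)
            (by linarith)
          rwa [intervalIntegrable_iff_integrableOn_Ioc_of_le hT.le] at this
        · filter_upwards [ae_restrict_mem measurableSet_Ioc] with t ht
          have ht0 : 0 < t := ht.1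
          simp only [Pi.zero_apply]
          positivity

/-! ### Almost orthogonality of the kernels -/

lemma integrable_ker {n : ℕ} (hn : 0 < n) {α : ℝ} (hα : 0 < α) (hα1 : α ≤ 1) {φ : Rn n → ℝ}
    (h : φ ∈ Calpha n α) {q : Rn n × ℝ} (hq : 0 < q.2) : Integrable (ker φ q) volume := by
  simpa using integrable_ker_mul hn hα hα1 h hq (f := fun _ => 1) (locallyIntegrable_const 1)

/-- Inner products of kernels decay with the ratio of their scales; by symmetry the bound is used
with `q` at the larger of the two scales. -/
lemma abs_integral_ker_mul_ker_le {n : ℕ} (hn : 0 < n) {α : ℝ} (hα : 0 < α) (hα1 : α ≤ 1)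
    {φ φ' : Rn n → ℝ} (h : φ ∈ Calpha n α) (h' : φ' ∈ Calpha n α) {q q' : Rn n × ℝ} (hq : 0 < q.2)
    (hq' : 0 < q'.2) :
    |∫ z, ker φ q z * ker φ' q' z| ≤
      3 * volume.real (ball (0 : Rn n) 1) * ((q.2 ^ n)⁻¹ * (q'.2 / q.2) ^ α) := by
  -- the mean value zero of the second kernel lets one subtract a constant from the first
  have e : ∫ z, ker φ q z * ker φ' q' z = ∫ z, (ker φ q z - ker φ q q'.1) * ker φ' q' z := by
    have hi : Integrable (fun z => ker φ q z * ker φ' q' z) volume :=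
      integrable_ker_mul hn hα hα1 h hq ((continuous_ker hα h' q').locallyIntegrable)
    simp_rw [sub_mul]
    rw [integral_sub hi ((integrable_ker hn hα hα1 h' hq').const_mul _), integral_const_mul,
      integral_ker h', mul_zero, sub_zero]
  have h0 : 0 < (q.2 ^ n)⁻¹ := by positivity
  have h0' : 0 < (q'.2 ^ n)⁻¹ := by positivity
  rw [e, ← Real.norm_eq_abs]
  have hI : Integrable ((closedBall q'.1 q'.2).indicator
      fun _ : Rn n => (q.2 ^ n)⁻¹ * (q'.2 / q.2) ^ α * (3 * (q'.2 ^ n)⁻¹)) volume :=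
    (integrable_indicator_iff measurableSet_closedBall).2
      (integrableOn_const measure_closedBall_lt_top.ne)
  refine (norm_integral_le_of_norm_le hI (Filter.Eventually.of_forall fun z => ?_)).trans_eq ?_
  · by_cases hz : z ∈ closedBall q'.1 q'.2
    · rw [indicator_of_mem hz, norm_mul]
      refine mul_le_mul ?_ (abs_ker_le hn hα hα1 h' hq' z) (norm_nonneg _) (by positivity)
      refine (abs_ker_sub_le h hq z q'.1).trans ?_
      gcongr
      exact hz
    · rw [indicator_of_notMem hz, ker_eq_zero h' hq' (by simpa using hz)]
      simp
  · rw [integral_indicator_const _ measurableSet_closedBall, smul_eq_mul, measureReal_def,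
      volume_closedBall_eq hn _ hq'.le, ENNReal.toReal_mul, ENNReal.toReal_ofReal (by positivity),
      ← measureReal_def]
    field_simp

lemma integral_ker_mul_ker_eq_zero {n : ℕ} {α : ℝ}
    {φ φ' : Rn n → ℝ} (h : φ ∈ Calpha n α) (h' : φ' ∈ Calpha n α) {q q' : Rn n × ℝ} (hq : 0 < q.2)
    (hq' : 0 < q'.2) (hd : q.2 + q'.2 < dist q'.1 q.1) :
    ∫ z, ker φ q z * ker φ' q' z = 0 := by
  have : ∀ z, ker φ q z * ker φ' q' z = 0 := fun z => by
    by_cases hz : q.2 < dist z q.1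
    · rw [ker_eq_zero h hq hz, zero_mul]
    · rw [ker_eq_zero h' hq' ?_, mul_zero]
      have := dist_triangle q'.1 z q.1
      rw [dist_comm q'.1 z] at this
      linarith
  simp [this]

/-! ### The estimate over a sawtooth region -/

/-- The points `x` at which all the averages of `|f|` over balls centred at `x` are at most a
multiple of `lam`. -/
def lowSet {n : ℕ} (f : Rn n → ℝ) (lam : ℝ) : Set (Rn n) :=
  {x | ∀ s : ℝ, 0 < s → ∫⁻ w in ball x s, ‖f w‖ₑ ≤ ENNReal.ofReal (lam * s ^ n)}

/-- The part of the sawtooth region above `F` (the union of the cones of aperture `1` with vertex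
in `F`) which lies at heights between `ε` and `1`, and over the ball of radius `M`. -/
def sawtooth {n : ℕ} (F : Set (Rn n)) (ε M : ℝ) : Set (Rn n × ℝ) :=
  {q | (ε < q.2 ∧ q.2 < 1) ∧ ‖q.1‖ < M ∧ infDist q.1 F < q.2}

lemma measurableSet_sawtooth {n : ℕ} (F : Set (Rn n)) (ε M : ℝ) :
    MeasurableSet (sawtooth F ε M) := by
  have hi : Continuous fun q : Rn n × ℝ => infDist q.1 F := (continuous_infDist_pt F).comp continuous_fst
  refine MeasurableSet.inter (MeasurableSet.inter ?_ ?_) (MeasurableSet.inter ?_ ?_)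
  · exact measurableSet_lt measurable_const measurable_snd
  · exact measurableSet_lt measurable_snd measurable_const
  · exact measurableSet_lt (f := fun q : Rn n × ℝ => ‖q.1‖) (by fun_prop) measurable_const
  · exact measurableSet_lt (f := fun q : Rn n × ℝ => infDist q.1 F) hi.measurable measurable_snd

/-- The measure `dy dt / t` on a set. -/
def scaleMeasure {n : ℕ} (R : Set (Rn n × ℝ)) : Measure (Rn n × ℝ) :=
  (volume.restrict R).withDensity fun q => ENNReal.ofReal q.2⁻¹

lemma lintegral_scaleMeasure_le {n : ℕ} {R : Set (Rn n × ℝ)} (hR : MeasurableSet R)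
    (G : Rn n × ℝ → ℝ≥0∞) :
    ∫⁻ q, G q ∂(scaleMeasure R) ≤ ∫⁻ q, R.indicator (fun q => ENNReal.ofReal q.2⁻¹ * G q) q := by
  rw [lintegral_indicator hR, scaleMeasure]
  exact lintegral_withDensity_le_lintegral_mul _ (by fun_prop) _

lemma lintegral_scaleMeasure {n : ℕ} {R : Set (Rn n × ℝ)} {G : Rn n × ℝ → ℝ≥0∞}
    (hG : Measurable G) :
    ∫⁻ q, G q ∂(scaleMeasure R) = ∫⁻ q in R, ENNReal.ofReal q.2⁻¹ * G q := by
  rw [scaleMeasure, lintegral_withDensity_eq_lintegral_mul _ (by fun_prop) hG]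
  rfl

lemma isFiniteMeasure_scaleMeasure {n : ℕ} (F : Set (Rn n)) {ε M : ℝ} (hε : 0 < ε) :
    IsFiniteMeasure (scaleMeasure (sawtooth F ε M)) := by
  refine isFiniteMeasure_withDensity (ne_of_lt ?_)
  have hsub : sawtooth F ε M ⊆ ball (0 : Rn n) M ×ˢ Ioo 0 1 := fun q hq =>
    ⟨by simpa using hq.2.1, hε.trans hq.1.1, hq.1.2⟩
  have hv : volume (sawtooth F ε M) < ∞ := by
    refine (measure_mono hsub).trans_lt ?_
    rw [Measure.volume_eq_prod, Measure.prod_prod]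
    exact ENNReal.mul_lt_top measure_ball_lt_top (by simp)
  calc ∫⁻ q in sawtooth F ε M, ENNReal.ofReal q.2⁻¹ ≤ ∫⁻ q in sawtooth F ε M, ENNReal.ofReal ε⁻¹ := by
        refine setLIntegral_mono_ae' (measurableSet_sawtooth F ε M)
          (Filter.Eventually.of_forall fun q hq => ?_)
        gcongr
        exact hq.1.1.le
    _ < ∞ := by
        rw [setLIntegral_const]
        exact ENNReal.mul_lt_top (by simp) hv

section

variable {n : ℕ} {α : ℝ} {Φ : ℕ → Rn n → ℝ} {F : Set (Rn n)} {ε M : ℝ} {i : Rn n × ℝ → ℕ}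

/-- The kernels with a profile selected from a sequence, depending on the point of the sawtooth
region. -/
def sawKer (Φ : ℕ → Rn n → ℝ) (F : Set (Rn n)) (ε M : ℝ) (i : Rn n × ℝ → ℕ) (q : Rn n × ℝ)
    (z : Rn n) : ℝ :=
  (sawtooth F ε M).indicator (fun q => ker (Φ (i q)) q z) q

lemma measurable_select (hi : Measurable i) {Y : Type*} [MeasurableSpace Y]
    {u : ℕ → (Rn n × ℝ) × Y → ℝ} (hu : ∀ k, Measurable (u k)) :
    Measurable fun w : (Rn n × ℝ) × Y => u (i w.1) w := by
  have : Measurable fun p : ℕ × ((Rn n × ℝ) × Y) => u p.1 p.2 :=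
    measurable_from_prod_countable_right hu
  exact this.comp ((hi.comp measurable_fst).prodMk measurable_id)

lemma measurable_sawKer (hα : 0 < α) (hΦ : ∀ k, Φ k ∈ Calpha n α) (hi : Measurable i) :
    Measurable fun w : (Rn n × ℝ) × Rn n => sawKer Φ F ε M i w.1 w.2 := by
  have h1 : Measurable fun w : (Rn n × ℝ) × Rn n => ker (Φ (i w.1)) w.1 w.2 :=
    measurable_select hi (u := fun k w => ker (Φ k) w.1 w.2) fun k => measurable_ker hα (hΦ k)
  exact h1.indicator (measurable_fst (measurableSet_sawtooth F ε M))

/-- Schur's condition for `T T*`: the almost orthogonality of the kernels is integrated over the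
scales smaller and larger than that of `q`. -/
lemma exists_schur_bound (hn : 0 < n) (hα : 0 < α) (hα1 : α ≤ 1) :
    ∃ C : ℝ≥0∞, C ≠ 0 ∧ C ≠ ∞ ∧ ∀ (Φ : ℕ → Rn n → ℝ) (F : Set (Rn n)) (ε M : ℝ) (i : Rn n × ℝ → ℕ),
      (∀ k, Φ k ∈ Calpha n α) → 0 < ε → ∀ q,
      ∫⁻ q', ‖∫ z, sawKer Φ F ε M i q z * sawKer Φ F ε M i q' z‖ₑ
        ∂(scaleMeasure (sawtooth F ε M)) ≤ C := by
  obtain ⟨C₁, h1t, h1⟩ := exists_large_scale_bound hn hα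
  obtain ⟨C₂, h2t, h2⟩ := exists_small_scale_bound hn hα
  set v := ENNReal.ofReal (3 * volume.real (ball (0 : Rn n) 1)) with hv
  refine ⟨v * C₂ + v * C₁ + 1, by simp, by finiteness, fun Φ F ε M i hΦ hε q => ?_⟩
  set R := sawtooth F ε M with hR
  by_cases hq : q ∈ R
  swap
  · simp [sawKer, ← hR, hq]
  have hq0 : 0 < q.2 := hε.trans hq.1.1
  refine (lintegral_scaleMeasure_le (measurableSet_sawtooth F ε M) _).trans ?_
  refine le_trans ?_ le_self_add
  refine le_trans ?_ (add_le_add (mul_le_mul_right (h2 q.2 hq0 q.1) v)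
    (mul_le_mul_right (h1 q.2 hq0 q.1) v))
  rw [← lintegral_const_mul' _ _ (by finiteness), ← lintegral_const_mul' _ _ (by finiteness)]
  have hm : Measurable fun a : Rn n × ℝ => v *
      {p : Rn n × ℝ | 0 < p.2 ∧ p.2 ≤ q.2 ∧ dist p.1 q.1 ≤ 2 * q.2}.indicator
        (fun p => ENNReal.ofReal ((q.2 ^ n)⁻¹ * (p.2 / q.2) ^ α * p.2⁻¹)) a := by
    refine Measurable.const_mul (Measurable.indicator (by fun_prop) ?_) v
    refine MeasurableSet.inter ?_ (MeasurableSet.inter ?_ ?_)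
    · exact measurableSet_lt measurable_const measurable_snd
    · exact measurableSet_le measurable_snd measurable_const
    · exact measurableSet_le (f := fun p : Rn n × ℝ => dist p.1 q.1) (by fun_prop) measurable_const
  rw [← lintegral_add_left hm]
  refine lintegral_mono fun q' => ?_
  by_cases hq' : q' ∈ R
  swap
  · rw [indicator_of_notMem hq']
    exact zero_le
  rw [indicator_of_mem hq']
  have hq0' : 0 < q'.2 := hε.trans hq'.1.1
  have e : ∫ z, sawKer Φ F ε M i q z * sawKer Φ F ε M i q' z =
      ∫ z, ker (Φ (i q)) q z * ker (Φ (i q')) q' z := by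
    simp [sawKer, ← hR, hq, hq']
  rw [e]
  by_cases hd : q.2 + q'.2 < dist q'.1 q.1
  · rw [integral_ker_mul_ker_eq_zero (hΦ _) (hΦ _) hq0 hq0' hd]
    simp
  push Not at hd
  rcases le_total q'.2 q.2 with hle | hle
  · refine le_trans ?_ le_self_add
    rw [indicator_of_mem (show q' ∈ {p : Rn n × ℝ | 0 < p.2 ∧ p.2 ≤ q.2 ∧ dist p.1 q.1 ≤ 2 * q.2}
      from ⟨hq0', hle, by linarith⟩), hv, ← ENNReal.ofReal_mul (by positivity), ← ofReal_norm,
      ← ENNReal.ofReal_mul (by positivity)]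
    refine ENNReal.ofReal_le_ofReal ?_
    exact (mul_le_mul_of_nonneg_left
      (abs_integral_ker_mul_ker_le hn hα hα1 (hΦ (i q)) (hΦ (i q')) hq0 hq0')
      (inv_nonneg.2 hq0'.le)).trans_eq (by ring)
  · refine le_trans ?_ le_add_self
    rw [indicator_of_mem (show q' ∈ {p : Rn n × ℝ | 0 < p.2 ∧ q.2 ≤ 3 * p.2 ∧ dist p.1 q.1 ≤ 4 * p.2}
      from ⟨hq0', by linarith, by linarith⟩), hv, ← ENNReal.ofReal_mul (by positivity), ← ofReal_norm,
      ← ENNReal.ofReal_mul (by positivity)]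
    refine ENNReal.ofReal_le_ofReal ?_
    simp_rw [mul_comm (ker (Φ (i q)) q _)]
    exact (mul_le_mul_of_nonneg_left
      (abs_integral_ker_mul_ker_le hn hα hα1 (hΦ (i q')) (hΦ (i q)) hq0' hq0)
      (inv_nonneg.2 hq0'.le)).trans_eq (by ring)

/-- The radius over which `|f|` is spread, comparable to the distance to `F`. -/
def spreadRadius (F : Set (Rn n)) (ε : ℝ) (w : Rn n) : ℝ := (infDist w F + ε) / 2

lemma spreadRadius_pos (hε : 0 < ε) (w : Rn n) : 0 < spreadRadius F ε w := by
  have := infDist_nonneg (x := w) (s := F)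
  unfold spreadRadius
  linarith

/-- Spreading `|f|` at the scale of the distance to `F = lowSet f lam` gives a bounded function: only
points of a ball of radius comparable to `r z` and centred in `F` contribute at `z`. -/
lemma spread_le (hn : 0 < n) (hε : 0 < ε) {f : Rn n → ℝ} {lam : ℝ}
    (hF : (lowSet f lam).Nonempty) (z : Rn n) :
    spread (spreadRadius (lowSet f lam) ε) f z ≤
      ENNReal.ofReal (lam * 8 ^ n) * (volume (ball (0 : Rn n) 1))⁻¹ := by
  set F := lowSet f lam with hFd
  set r := spreadRadius F ε with hr
  have hrz : 0 < r z := spreadRadius_pos hε z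
  obtain ⟨x, hx, hxz⟩ := (infDist_lt_iff hF (x := z) (r := 2 * r z)).1 (by
    rw [hr]; unfold spreadRadius; linarith)
  have key : spread r f z ≤ ∫⁻ w in ball x (4 * r z),
      ‖f w‖ₑ * (volume (ball (0 : Rn n) (r z / 2)))⁻¹ := by
    rw [← lintegral_indicator measurableSet_ball]
    refine lintegral_mono fun w => ?_
    by_cases hw : z ∈ ball w (r w)
    swap
    · rw [indicator_of_notMem hw]
      exact zero_le
    have hd : dist z w < r w := hw
    have i1 : infDist w F ≤ infDist z F + dist w z := infDist_le_infDist_add_dist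
    have i2 : infDist z F ≤ infDist w F + dist z w := infDist_le_infDist_add_dist
    have e1 : r w = (infDist w F + ε) / 2 := rfl
    have e2 : r z = (infDist z F + ε) / 2 := rfl
    rw [dist_comm w z] at i1
    have hwx : w ∈ ball x (4 * r z) := by
      rw [mem_ball]
      have := dist_triangle w z x
      rw [dist_comm w z] at this
      linarith
    rw [indicator_of_mem hw, indicator_of_mem hwx]
    gcongr 1
    rw [ENNReal.inv_le_inv, volume_ball_eq hn w (by linarith), volume_ball_eq hn 0 (by linarith)]
    gcongr
    linarith
  refine key.trans ?_
  rw [lintegral_mul_const' _ _ (by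
    rw [Ne, ENNReal.inv_eq_top]; exact (measure_ball_pos volume _ (by positivity)).ne')]
  refine (mul_le_mul_left (hx _ (by positivity)) _).trans_eq ?_
  rw [volume_ball_eq hn 0 (by positivity), ENNReal.mul_inv (Or.inl (by positivity)) (Or.inl (by simp)),
    ← mul_assoc, ← ENNReal.ofReal_inv_of_pos (by positivity), ← ENNReal.ofReal_mul' (by positivity)]
  congr 2
  rw [show (8 : ℝ) = 4 * 2 by norm_num, mul_pow, mul_pow, div_pow]
  field_simp

end

section

variable {n : ℕ} {α : ℝ}

lemma abs_conv_le_of_near_lowSet (hn : 0 < n) (hα : 0 < α) (hα1 : α ≤ 1) {φ f : Rn n → ℝ}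
    (h : φ ∈ Calpha n α) (hf : Integrable f volume) {lam : ℝ} (hlam : 0 ≤ lam) {q : Rn n × ℝ}
    (hq : 0 < q.2) {x : Rn n} (hx : x ∈ lowSet f lam) (hd : dist q.1 x < q.2) :
    |conv φ f q| ≤ 3 * 2 ^ n * lam := by
  have h1 : ∫ z in closedBall q.1 q.2, |f z| ≤ lam * (2 * q.2) ^ n := by
    simp_rw [← Real.norm_eq_abs]
    rw [integral_norm_eq_lintegral_enorm hf.aestronglyMeasurable.restrict]
    refine ENNReal.toReal_le_of_le_ofReal (by positivity) ?_
    refine le_trans (lintegral_mono_set fun z hz => ?_) (hx (2 * q.2) (by positivity))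
    rw [mem_ball]
    rw [mem_closedBall] at hz
    have := dist_triangle z q.1 x
    linarith
  calc _ ≤ 3 * (q.2 ^ n)⁻¹ * ∫ z in closedBall q.1 q.2, |f z| :=
        abs_conv_le hn hα hα1 h hq hf.locallyIntegrable
    _ ≤ 3 * (q.2 ^ n)⁻¹ * (lam * (2 * q.2) ^ n) := by gcongr
    _ = _ := by
      rw [mul_pow]
      field_simp

/-- The oscillation of `T* (T f)` over the balls `B(w, r w)` is bounded: in the sawtooth region
`|T f| ≲ lam`, and the regions where the kernel sees `w` or `z` have height `t ≳ r w`, so its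
Hölder continuity gives a factor `(r w / t) ^ α`. -/
lemma exists_osc_bound (hn : 0 < n) (hα : 0 < α) (hα1 : α ≤ 1) {lam : ℝ} (hlam : 0 ≤ lam) :
    ∃ C : ℝ≥0∞, C ≠ ∞ ∧ ∀ (Φ : ℕ → Rn n → ℝ) (f : Rn n → ℝ) (ε M : ℝ) (i : Rn n × ℝ → ℕ),
      (∀ k, Φ k ∈ Calpha n α) → Integrable f volume → (lowSet f lam).Nonempty → 0 < ε →
      ∀ w z, z ∈ ball w (spreadRadius (lowSet f lam) ε w) →
      ∫⁻ q, ‖∫ x, sawKer Φ (lowSet f lam) ε M i q x * f x‖ₑ *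
        ‖sawKer Φ (lowSet f lam) ε M i q w - sawKer Φ (lowSet f lam) ε M i q z‖ₑ
        ∂(scaleMeasure (sawtooth (lowSet f lam) ε M)) ≤ C := by
  obtain ⟨C₁, h1t, h1⟩ := exists_large_scale_bound hn hα
  set v := ENNReal.ofReal (3 * 2 ^ n * lam) with hv
  refine ⟨v * C₁, by finiteness, fun Φ f ε M i hΦ hf hne hε w z hz => ?_⟩
  set F := lowSet f lam with hF
  have hr0 : 0 < spreadRadius F ε w := spreadRadius_pos hε w
  refine (lintegral_scaleMeasure_le (measurableSet_sawtooth F ε M) _).trans ?_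
  refine le_trans ?_ (mul_le_mul_right (h1 (spreadRadius F ε w) hr0 w) v)
  rw [← lintegral_const_mul' _ _ (by finiteness)]
  refine lintegral_mono fun q => ?_
  by_cases hq : q ∈ sawtooth F ε M
  swap
  · rw [indicator_of_notMem hq]
    exact zero_le
  rw [indicator_of_mem hq]
  have hq0 : 0 < q.2 := hε.trans hq.1.1
  simp only [sawKer, indicator_of_mem hq]
  by_cases hd : q.2 < dist w q.1 ∧ q.2 < dist z q.1
  · rw [ker_eq_zero (hΦ _) hq0 hd.1, ker_eq_zero (hΦ _) hq0 hd.2]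
    simp
  have hzw : dist z w < spreadRadius F ε w := hz
  have hmem : q ∈ {p : Rn n × ℝ | 0 < p.2 ∧ spreadRadius F ε w ≤ 3 * p.2 ∧ dist p.1 w ≤ 4 * p.2} := by
    have er : spreadRadius F ε w = (infDist w F + ε) / 2 := rfl
    have i1 : infDist w F ≤ infDist q.1 F + dist w q.1 := infDist_le_infDist_add_dist
    have hq1 := hq.1.1
    have hq2 := hq.2.2
    have i2 := dist_triangle w z q.1
    rw [dist_comm w z] at i2
    rw [not_and_or, not_lt, not_lt] at hd
    rcases hd with hd | hd
    · exact ⟨hq0, by linarith, by rw [dist_comm]; linarith⟩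
    · exact ⟨hq0, by linarith, by rw [dist_comm]; linarith⟩
  rw [indicator_of_mem hmem]
  obtain ⟨x, hx, hdx⟩ := (infDist_lt_iff hne).1 hq.2.2
  have hconv : |∫ x, ker (Φ (i q)) q x * f x| ≤ 3 * 2 ^ n * lam :=
    abs_conv_le_of_near_lowSet hn hα hα1 (hΦ (i q)) hf hlam hq0 hx hdx
  have hsub : |ker (Φ (i q)) q w - ker (Φ (i q)) q z| ≤
      (q.2 ^ n)⁻¹ * (spreadRadius F ε w / q.2) ^ α := by
    refine (abs_ker_sub_le (hΦ _) hq0 w z).trans ?_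
    rw [dist_comm]
    gcongr
  rw [← ofReal_norm, ← ofReal_norm, ← ENNReal.ofReal_mul (norm_nonneg _),
    ← ENNReal.ofReal_mul (by positivity), hv, ← ENNReal.ofReal_mul (by positivity)]
  refine ENNReal.ofReal_le_ofReal ?_
  calc _ ≤ q.2⁻¹ * ((3 * 2 ^ n * lam) * ((q.2 ^ n)⁻¹ * (spreadRadius F ε w / q.2) ^ α)) := by
        refine mul_le_mul_of_nonneg_left ?_ (inv_nonneg.2 hq0.le)
        exact mul_le_mul hconv hsub (norm_nonneg _) (by positivity)
    _ = _ := by ring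

/-- The square function estimate over the truncated sawtooth regions above the set where the
maximal function of `f` is small, uniformly in the truncation and in the choice of profiles. -/
lemma exists_sawtooth_bound (hn : 0 < n) (hα : 0 < α) (hα1 : α ≤ 1) {lam : ℝ} (hlam : 0 ≤ lam)
    {f : Rn n → ℝ} (hfm : Measurable f) (hf : Integrable f volume) (hne : (lowSet f lam).Nonempty)
    {Φ : ℕ → Rn n → ℝ} (hΦ : ∀ k, Φ k ∈ Calpha n α) :
    ∃ C : ℝ≥0∞, C ≠ ∞ ∧ ∀ (ε M : ℝ) (i : Rn n × ℝ → ℕ), Measurable i → 0 < ε →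
      ∫⁻ q in sawtooth (lowSet f lam) ε M, ENNReal.ofReal q.2⁻¹ * ‖conv (Φ (i q)) f q‖ₑ ^ 2 ≤ C := by
  obtain ⟨C₀, hC0, hCt, hC⟩ := exists_schur_bound (α := α) hn hα hα1
  obtain ⟨E, hEt, hE⟩ := exists_osc_bound hn hα hα1 hlam
  set F := lowSet f lam with hF
  have hω : volume (ball (0 : Rn n) 1) ≠ 0 := (measure_ball_pos volume _ one_pos).ne'
  set Λ := ENNReal.ofReal (lam * 8 ^ n) * (volume (ball (0 : Rn n) 1))⁻¹ with hΛ
  have hΛt : Λ ≠ ∞ := ENNReal.mul_ne_top (by simp) (ENNReal.inv_ne_top.2 hω)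
  have hft : ∫⁻ z, ‖f z‖ₑ ≠ ∞ := hf.2.ne
  refine ⟨2 * ((E + 4 * C₀ * Λ) * ∫⁻ z, ‖f z‖ₑ), by finiteness, fun ε M i hi hε => ?_⟩
  have hfin : IsFiniteMeasure (scaleMeasure (sawtooth F ε M)) := isFiniteMeasure_scaleMeasure F hε
  have hk : Measurable fun w : (Rn n × ℝ) × Rn n => sawKer Φ F ε M i w.1 w.2 :=
    measurable_sawKer hα hΦ hi
  set b : Rn n → ℝ := (closedBall (0 : Rn n) (M + 1)).indicator fun _ => 3 * (ε ^ n)⁻¹ with hb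
  have hc0 : 0 ≤ 3 * (ε ^ n)⁻¹ := by positivity
  have hbi : Integrable b volume :=
    (integrable_indicator_iff measurableSet_closedBall).2
      (integrableOn_const measure_closedBall_lt_top.ne)
  have hb0 : ∀ z, 0 ≤ b z := fun z => indicator_nonneg (fun _ _ => hc0) z
  have hbB : ∀ z, b z ≤ 3 * (ε ^ n)⁻¹ := fun z => indicator_le_self' (fun _ _ => hc0) z
  have hkb : ∀ q z, |sawKer Φ F ε M i q z| ≤ b z := by
    intro q z
    by_cases hq : q ∈ sawtooth F ε M
    swap
    · rw [sawKer, indicator_of_notMem hq, abs_zero]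
      exact hb0 z
    rw [sawKer, indicator_of_mem hq]
    have hq0 : 0 < q.2 := hε.trans hq.1.1
    by_cases hz : q.2 < dist z q.1
    · rw [ker_eq_zero (hΦ _) hq0 hz, abs_zero]
      exact hb0 z
    have hz' : z ∈ closedBall (0 : Rn n) (M + 1) := by
      rw [mem_closedBall]
      have h1 := dist_triangle z q.1 0
      have h2 := hq.2.1
      have h3 := hq.1.2
      rw [← dist_zero_right] at h2
      linarith
    rw [hb, indicator_of_mem hz']
    refine (abs_ker_le hn hα hα1 (hΦ _) hq0 z).trans ?_
    gcongr
    exact hq.1.1.le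
  have hr : Measurable (spreadRadius F ε) := by
    unfold spreadRadius
    have := (continuous_infDist_pt F).measurable
    fun_prop
  have main := lintegral_sq_le_of_TT hn hk hbi hb0 hbB hkb hfm hf hr (spreadRadius_pos hε) hC0 hCt
    (hC Φ F ε M i hΦ hε) (hE Φ f ε M i hΦ hf hne hε) (spread_le hn hε hne)
  refine le_trans (le_of_eq ?_) main
  rw [lintegral_scaleMeasure]
  · refine setLIntegral_congr_fun (measurableSet_sawtooth F ε M) fun q hq => ?_
    simp only [sawKer, indicator_of_mem hq]
    rfl
  · have : StronglyMeasurable (Function.uncurry fun q z => sawKer Φ F ε M i q z * f z) :=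
      (hk.mul (hfm.comp measurable_snd)).stronglyMeasurable
    exact this.integral_prod_right.measurable.enorm.pow_const 2

end

/-! ### Almost everywhere finiteness of the local square function -/

/-- The square of the maximal function `A_α(f)`, computed with a dense sequence of profiles. -/
def dens {n : ℕ} (Φ : ℕ → Rn n → ℝ) (f : Rn n → ℝ) (q : Rn n × ℝ) : ℝ≥0∞ :=
  ⨆ k, ‖conv (Φ k) f q‖ₑ ^ 2

/-- The density `A_α(f)² / t^{n+1}` which is integrated over cones. -/
def sqDens {n : ℕ} (Φ : ℕ → Rn n → ℝ) (f : Rn n → ℝ) (q : Rn n × ℝ) : ℝ≥0∞ :=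
  dens Φ f q * ENNReal.ofReal (q.2 ^ (n + 1))⁻¹

/-- The part of `sqDens` at heights less than `1`. -/
def locDens {n : ℕ} (Φ : ℕ → Rn n → ℝ) (f : Rn n → ℝ) : Rn n × ℝ → ℝ≥0∞ :=
  {q : Rn n × ℝ | q.2 < 1}.indicator (sqDens Φ f)

section

variable {n : ℕ} {α : ℝ} {Φ : ℕ → Rn n → ℝ}

lemma indicator_le_of_imp {X : Type*} {s : Set X} {F : X → ℝ≥0∞} {x : X} {y : ℝ≥0∞}
    (h : x ∈ s → F x ≤ y) : s.indicator F x ≤ y := by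
  by_cases hx : x ∈ s
  · rw [indicator_of_mem hx]
    exact h hx
  · rw [indicator_of_notMem hx]
    exact zero_le

lemma measurable_dens (hα : 0 < α) (hΦ : ∀ k, Φ k ∈ Calpha n α) {f : Rn n → ℝ}
    (hf : Measurable f) : Measurable (dens Φ f) :=
  Measurable.iSup fun k => (measurable_conv hα (hΦ k) hf).enorm.pow_const 2

lemma measurable_sqDens (hα : 0 < α) (hΦ : ∀ k, Φ k ∈ Calpha n α) {f : Rn n → ℝ}
    (hf : Measurable f) : Measurable (sqDens Φ f) :=
  (measurable_dens hα hΦ hf).mul (by fun_prop)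

lemma measurable_locDens (hα : 0 < α) (hΦ : ∀ k, Φ k ∈ Calpha n α) {f : Rn n → ℝ}
    (hf : Measurable f) : Measurable (locDens Φ f) :=
  (measurable_sqDens hα hΦ hf).indicator (measurableSet_lt measurable_snd measurable_const)

/-- A measurable selection of the largest of finitely many functions. -/
lemma exists_measurable_argmax {Q : Type*} [MeasurableSpace Q] {u : ℕ → Q → ℝ≥0∞}
    (hu : ∀ k, Measurable (u k)) (N : ℕ) :
    ∃ i : Q → ℕ, Measurable i ∧ (Measurable fun q => u (i q) q) ∧
      ∀ q, ∀ k ≤ N, u k q ≤ u (i q) q := by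
  induction N with
  | zero =>
    exact ⟨fun _ => 0, measurable_const, hu 0, fun q k hk => by rw [Nat.le_zero.1 hk]⟩
  | succ N ih =>
    obtain ⟨i, hi, hui, hmax⟩ := ih
    classical
    have hS : MeasurableSet {q | u (i q) q < u (N + 1) q} := measurableSet_lt hui (hu _)
    have e : (fun q => u (if u (i q) q < u (N + 1) q then N + 1 else i q) q) =
        fun q => if u (i q) q < u (N + 1) q then u (N + 1) q else u (i q) q := by
      funext q
      split_ifs <;> rfl
    refine ⟨fun q => if u (i q) q < u (N + 1) q then N + 1 else i q,
      Measurable.ite hS measurable_const hi, ?_, fun q k hk => ?_⟩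
    · rw [e]
      exact Measurable.ite hS (hu _) hui
    · have eq := congrFun e q
      simp only at eq ⊢
      rw [eq]
      rcases Nat.lt_or_eq_of_le hk with h | rfl
      · have := hmax q k (by omega)
        split_ifs with h'
        · exact this.trans h'.le
        · exact this
      · split_ifs with h'
        · exact le_rfl
        · exact not_lt.1 h'

/-- The bound being independent of the selected profiles, one may select nearly extremal ones; the
truncations are then removed by Fatou's lemma. -/
lemma lintegral_dens_lt_top (hn : 0 < n) (hα : 0 < α) (hα1 : α ≤ 1) {lam : ℝ} (hlam : 0 ≤ lam)
    {f : Rn n → ℝ} (hfm : Measurable f) (hf : Integrable f volume) (hne : (lowSet f lam).Nonempty)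
    (hΦ : ∀ k, Φ k ∈ Calpha n α) :
    ∫⁻ q, {q : Rn n × ℝ | (0 < q.2 ∧ q.2 < 1) ∧ infDist q.1 (lowSet f lam) < q.2}.indicator
      (fun q => ENNReal.ofReal q.2⁻¹ * dens Φ f q) q < ∞ := by
  obtain ⟨C, hCt, hC⟩ := exists_sawtooth_bound hn hα hα1 hlam hfm hf hne hΦ
  set F := lowSet f lam with hF
  set u : ℕ → Rn n × ℝ → ℝ≥0∞ := fun k q => ‖conv (Φ k) f q‖ₑ ^ 2 with hu
  have hum : ∀ k, Measurable (u k) := fun k => (measurable_conv hα (hΦ k) hfm).enorm.pow_const 2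
  choose i hi hui hmax using exists_measurable_argmax hum
  set ε : ℕ → ℝ := fun N => 1 / ((N : ℝ) + 1) with hε
  have hε0 : ∀ N, 0 < ε N := fun N => Nat.one_div_pos_of_nat
  set G : ℕ → Rn n × ℝ → ℝ≥0∞ := fun N => (sawtooth F (ε N) N).indicator
    fun q => ENNReal.ofReal q.2⁻¹ * u (i N q) q with hG
  have hGm : ∀ N, Measurable (G N) := fun N =>
    (Measurable.mul (by fun_prop) (hui N)).indicator (measurableSet_sawtooth _ _ _)
  have hGC : ∀ N, ∫⁻ q, G N q ≤ C := fun N => by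
    simp only [hG]
    rw [lintegral_indicator (measurableSet_sawtooth _ _ _)]
    exact hC (ε N) N (i N) (hi N) (hε0 N)
  refine lt_of_le_of_lt ?_ (lt_top_iff_ne_top.2 hCt)
  calc _ ≤ ∫⁻ q, Filter.liminf (fun N => G N q) Filter.atTop := by
        refine lintegral_mono fun q => ?_
        refine indicator_le_of_imp fun hq => ?_
        rw [dens, ENNReal.mul_iSup]
        refine iSup_le fun k => ?_
        refine Filter.le_liminf_of_le (by isBoundedDefault) ?_
        have h1 : ∀ᶠ N : ℕ in Filter.atTop, ε N < q.2 :=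
          (tendsto_one_div_add_atTop_nhds_zero_nat (𝕜 := ℝ)).eventually (gt_mem_nhds hq.1.1)
        have h2 : ∀ᶠ N : ℕ in Filter.atTop, ‖q.1‖ < N :=
          tendsto_natCast_atTop_atTop.eventually (Filter.eventually_gt_atTop _)
        filter_upwards [h1, h2, Filter.eventually_ge_atTop k] with N hN1 hN2 hN3
        have hm : q ∈ sawtooth F (ε N) N := ⟨⟨hN1, hq.1.2⟩, hN2, hq.2⟩
        simp only [hG, indicator_of_mem hm]
        gcongr
        exact hmax N q k hN3
    _ ≤ Filter.liminf (fun N => ∫⁻ q, G N q) Filter.atTop := lintegral_liminf_le hGm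
    _ ≤ C := by
        refine Filter.liminf_le_of_le (by isBoundedDefault) fun b hb => ?_
        obtain ⟨N, hN⟩ := hb.exists
        exact hN.trans (hGC N)

lemma ae_coneV_locDens_lt_top_of_mem_lowSet (hn : 0 < n) (hα : 0 < α) (hα1 : α ≤ 1) {lam : ℝ}
    (hlam : 0 ≤ lam) {f : Rn n → ℝ} (hfm : Measurable f) (hf : Integrable f volume)
    (hΦ : ∀ k, Φ k ∈ Calpha n α) :
    ∀ᵐ x, x ∈ lowSet f lam → coneV (locDens Φ f) 1 x < ∞ := by
  rcases (lowSet f lam).eq_empty_or_nonempty with he | hne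
  · simp [he]
  have hlm := measurable_locDens hα hΦ hfm
  have hcm := measurable_coneV hlm 1
  rw [← ae_restrict_iff (measurableSet_lt hcm measurable_const)]
  refine ae_lt_top hcm (ne_of_lt ?_)
  rw [lintegral_coneV hlm]
  have hω : volume (ball (0 : Rn n) 1) ≠ ∞ := measure_ball_lt_top.ne
  refine lt_of_le_of_lt ?_ (ENNReal.mul_lt_top (lintegral_dens_lt_top hn hα hα1 hlam hfm hf hne hΦ)
    hω.lt_top)
  rw [← lintegral_mul_const' _ _ hω, ← lintegral_indicator (measurableSet_lt measurable_const measurable_snd)]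
  refine lintegral_mono fun q => ?_
  refine indicator_le_of_imp fun hq => ?_
  have hq0 : 0 < q.2 := hq
  rw [one_mul]
  by_cases h1 : q.2 < 1
  swap
  · rw [locDens, indicator_of_notMem (by exact h1), zero_mul]
    exact zero_le
  rcases (ball q.1 q.2 ∩ lowSet f lam).eq_empty_or_nonempty with hb | ⟨x, hxb, hxF⟩
  · rw [hb, measure_empty, mul_zero]
    exact zero_le
  have hd : infDist q.1 (lowSet f lam) < q.2 :=
    (infDist_le_dist_of_mem hxF).trans_lt (by rw [dist_comm]; exact hxb)
  rw [locDens, indicator_of_mem (by exact h1), indicator_of_mem (by exact ⟨⟨hq0, h1⟩, hd⟩), sqDens]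
  calc _ ≤ dens Φ f q * ENNReal.ofReal (q.2 ^ (n + 1))⁻¹ *
        (ENNReal.ofReal (q.2 ^ n) * volume (ball (0 : Rn n) 1)) := by
        rw [← volume_ball_eq hn q.1 hq0.le]
        gcongr
        exact inter_subset_left
    _ = _ := by
        have : ENNReal.ofReal q.2⁻¹ =
            ENNReal.ofReal (q.2 ^ (n + 1))⁻¹ * ENNReal.ofReal (q.2 ^ n) := by
          rw [← ENNReal.ofReal_mul (by positivity)]
          congr 1
          field_simp
          ring
        rw [this]
        ring

end

section

variable {n : ℕ} {α : ℝ} {Φ : ℕ → Rn n → ℝ}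

/-- The maximal function of an integrable function is finite almost everywhere: averages over small
balls are controlled by differentiation of measures, those over the other balls by the integral. -/
lemma ae_exists_mem_lowSet (hn : 0 < n) {f : Rn n → ℝ} (hf : Integrable f volume) :
    ∀ᵐ x, ∃ m : ℕ, x ∈ lowSet f m := by
  set ρ : Measure (Rn n) := volume.withDensity fun w => ‖f w‖ₑ with hρ
  have hI : ∫⁻ w, ‖f w‖ₑ < ∞ := hf.2
  have hfin : IsFiniteMeasure ρ := isFiniteMeasure_withDensity hI.ne
  have hρs : ∀ s : Set (Rn n), MeasurableSet s → ρ s = ∫⁻ w in s, ‖f w‖ₑ := fun s hs =>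
    withDensity_apply _ hs
  have hω : volume (ball (0 : Rn n) 1) ≠ ∞ := measure_ball_lt_top.ne
  filter_upwards [Besicovitch.ae_tendsto_rnDeriv ρ volume, Measure.rnDeriv_lt_top ρ volume]
    with x hx hxt
  set D := ρ.rnDeriv volume x + 1 with hD
  have hDt : D ≠ ∞ := by finiteness
  have hlt : ρ.rnDeriv volume x < D := ENNReal.lt_add_right hxt.ne one_ne_zero
  have hev := hx.eventually (gt_mem_nhds hlt)
  obtain ⟨δ, hδ, hδs⟩ := mem_nhdsGT_iff_exists_Ioo_subset.1 hev
  rw [mem_Ioi] at hδ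
  obtain ⟨m, hm⟩ := exists_nat_ge (max (D * volume (ball (0 : Rn n) 1)).toReal
    ((∫⁻ w, ‖f w‖ₑ).toReal / δ ^ n))
  refine ⟨m, fun s hs => ?_⟩
  by_cases hsδ : s < δ
  · have h1 : ρ (closedBall x s) / volume (closedBall x s) < D := hδs ⟨hs, hsδ⟩
    have h2 : ρ (closedBall x s) ≤ D * volume (closedBall x s) :=
      (ENNReal.div_le_iff (measure_closedBall_pos volume x hs).ne'
        measure_closedBall_lt_top.ne).1 h1.le
    calc ∫⁻ w in ball x s, ‖f w‖ₑ = ρ (ball x s) := (hρs _ measurableSet_ball).symm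
      _ ≤ ρ (closedBall x s) := measure_mono ball_subset_closedBall
      _ ≤ D * volume (closedBall x s) := h2
      _ = ENNReal.ofReal ((D * volume (ball (0 : Rn n) 1)).toReal * s ^ n) := by
        rw [ENNReal.ofReal_mul ENNReal.toReal_nonneg, ENNReal.ofReal_toReal (by finiteness),
          volume_closedBall_eq hn x hs.le]
        ring
      _ ≤ _ := by
        gcongr
        exact (le_max_left _ _).trans hm
  · push Not at hsδ
    calc ∫⁻ w in ball x s, ‖f w‖ₑ ≤ ∫⁻ w, ‖f w‖ₑ := setLIntegral_le_lintegral _ _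
      _ = ENNReal.ofReal ((∫⁻ w, ‖f w‖ₑ).toReal / δ ^ n * δ ^ n) := by
        rw [div_mul_cancel₀ _ (by positivity), ENNReal.ofReal_toReal hI.ne]
      _ ≤ _ := by
        gcongr
        exact (le_max_right _ _).trans hm

lemma conv_congr_closedBall {φ f g : Rn n → ℝ} (h : φ ∈ Calpha n α) {q : Rn n × ℝ} (hq : 0 < q.2)
    (hfg : ∀ z ∈ closedBall q.1 q.2, f z = g z) : conv φ f q = conv φ g q := by
  refine integral_congr_ae (Filter.Eventually.of_forall fun z => ?_)
  by_cases hz : z ∈ closedBall q.1 q.2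
  · simp only [hfg z hz]
  · simp only [ker_eq_zero h hq (show q.2 < dist z q.1 by simpa using hz), zero_mul]

/-- The local square function of a locally integrable function is finite almost everywhere. -/
lemma ae_coneV_locDens_lt_top (hn : 0 < n) (hα : 0 < α) (hα1 : α ≤ 1)
    {f : Rn n → ℝ} (hfm : Measurable f) (hf : LocallyIntegrable f volume)
    (hΦ : ∀ k, Φ k ∈ Calpha n α) :
    ∀ᵐ x, coneV (locDens Φ f) 1 x < ∞ := by
  -- near a given ball, `f` can be replaced by an integrable function
  set g : ℕ → Rn n → ℝ := fun L => (closedBall (0 : Rn n) (L + 2)).indicator f with hg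
  have hgm : ∀ L, Measurable (g L) := fun L => hfm.indicator measurableSet_closedBall
  have hgi : ∀ L, Integrable (g L) volume := fun L =>
    (integrable_indicator_iff measurableSet_closedBall).2
      (hf.integrableOn_isCompact (isCompact_closedBall _ _))
  have hfin : ∀ L, ∀ᵐ x, coneV (locDens Φ (g L)) 1 x < ∞ := by
    intro L
    have h1 : ∀ᵐ x, ∀ m : ℕ, x ∈ lowSet (g L) m → coneV (locDens Φ (g L)) 1 x < ∞ :=
      ae_all_iff.2 fun m => ae_coneV_locDens_lt_top_of_mem_lowSet hn hα hα1 (Nat.cast_nonneg m)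
        (hgm L) (hgi L) hΦ
    filter_upwards [h1, ae_exists_mem_lowSet hn (hgi L)] with x hx1 hx2
    obtain ⟨m, hm⟩ := hx2
    exact hx1 m hm
  filter_upwards [ae_all_iff.2 hfin] with x hx
  obtain ⟨L, hL⟩ := exists_nat_ge ‖x‖
  refine lt_of_eq_of_lt ?_ (hx L)
  refine setLIntegral_congr_fun (measurableSet_cone 1 x) fun q hq => ?_
  simp only [locDens]
  by_cases h1 : q.2 < 1
  swap
  · rw [indicator_of_notMem (by exact h1), indicator_of_notMem (by exact h1)]
  rw [indicator_of_mem (by exact h1), indicator_of_mem (by exact h1), sqDens, sqDens, dens, dens]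
  congr 2
  ext1 k
  rw [conv_congr_closedBall (hΦ k) hq.1 (g := g L)]
  intro z hz
  have hz' : z ∈ closedBall (0 : Rn n) (L + 2) := by
    rw [mem_closedBall] at hz ⊢
    have h2 := dist_triangle z q.1 0
    have h3 := dist_triangle q.1 x 0
    have h4 := hq.2
    rw [dist_comm] at h4
    rw [← dist_zero_right] at hL
    linarith
  rw [hg]
  simp only [indicator_of_mem hz']

end

/-! ### Comparison of the square functions of apertures `2 ^ j` and `1` -/

section

variable {n : ℕ} {α : ℝ} {Φ : ℕ → Rn n → ℝ}

lemma Aalpha_nonneg (f : Rn n → ℝ) (y : Rn n) (t : ℝ) : 0 ≤ Aalpha α f y t :=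
  Real.iSup_nonneg fun _ => Real.iSup_nonneg fun _ => abs_nonneg _

lemma sqDens_eq (hn : 0 < n) (hα : 0 < α) (hα1 : α ≤ 1) (hΦ : ∀ k, Φ k ∈ Calpha n α)
    (hd : ∀ ψ ∈ Calpha n α, ∀ δ > 0, ∃ k, ∀ x, |ψ x - Φ k x| ≤ δ)
    {f : Rn n → ℝ} (hf : LocallyIntegrable f volume) {q : Rn n × ℝ} (hq : 0 < q.2) :
    sqDens Φ f q = ENNReal.ofReal (Aalpha α f q.1 q.2 ^ 2 / q.2 ^ (n + 1)) := by
  have h2 : ENNReal.ofReal (Aalpha α f q.1 q.2 ^ 2) = dens Φ f q := by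
    rw [ENNReal.ofReal_pow (Aalpha_nonneg f q.1 q.2), ofReal_Aalpha hn hα hα1 hΦ hd hf hq, dens]
    have := (ENNReal.orderIsoRpow 2 (by norm_num)).map_iSup fun k => ‖conv (Φ k) f q‖ₑ
    simp only [ENNReal.orderIsoRpow_apply] at this
    exact_mod_cast this
  rw [sqDens, ← h2, div_eq_mul_inv, ENNReal.ofReal_mul (sq_nonneg _)]

/-- The intrinsic square function as the root of a cone mass. An infinite cone mass corresponds
to a divergent integral, and both sides are then `0` by convention. -/
lemma Salpha_eq (hn : 0 < n) (hα : 0 < α) (hα1 : α ≤ 1) (hΦ : ∀ k, Φ k ∈ Calpha n α)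
    (hd : ∀ ψ ∈ Calpha n α, ∀ δ > 0, ∃ k, ∀ x, |ψ x - Φ k x| ≤ δ)
    {f : Rn n → ℝ} (hfm : Measurable f) (hf : LocallyIntegrable f volume) (β : ℝ) (x : Rn n) :
    Salpha α β f x = √(coneV (sqDens Φ f) β x).toReal := by
  rw [Salpha, coneV, ← integral_toReal (measurable_sqDens hα hΦ hfm).aemeasurable]
  · congr 1
    refine setIntegral_congr_fun (measurableSet_cone β x) fun q hq => ?_
    have hq0 : 0 < q.2 := hq.1
    rw [sqDens_eq hn hα hα1 hΦ hd hf hq0, ENNReal.toReal_ofReal (by positivity)]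
  · refine (ae_restrict_iff' (measurableSet_cone β x)).2 (Filter.Eventually.of_forall fun q hq => ?_)
    rw [sqDens_eq hn hα hα1 hΦ hd hf hq.1]
    exact ENNReal.ofReal_lt_top

lemma Salpha_congr_ae (β : ℝ) {f g : Rn n → ℝ} (h : f =ᵐ[volume] g) :
    Salpha α β f = Salpha α β g := by
  have : Aalpha α f = Aalpha α g := by
    funext y t
    have e (φ : Rn n → ℝ) : ∫ z, (t ^ n)⁻¹ * φ (t⁻¹ • (y - z)) * f z =
        ∫ z, (t ^ n)⁻¹ * φ (t⁻¹ • (y - z)) * g z :=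
      integral_congr_ae (h.mono fun z hz => by simp only [hz])
    simp only [Aalpha, e]
  funext x
  simp only [Salpha, this]

/-- At heights in `[1, T]` the truncated cone has finite mass, since `f` is integrable on the ball
in which all the convolutions live. -/
lemma lintegral_mid_lt_top (hn : 0 < n) (hα : 0 < α) (hα1 : α ≤ 1) (hΦ : ∀ k, Φ k ∈ Calpha n α)
    {f : Rn n → ℝ} (hf : LocallyIntegrable f volume) (x : Rn n) (T : ℝ) :
    ∫⁻ q in closedBall x T ×ˢ Icc 1 T, sqDens Φ f q < ∞ := by
  set J := ∫ z in closedBall x (T + T), |f z| with hJ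
  have hJ0 : 0 ≤ J := integral_nonneg fun _ => abs_nonneg _
  have hS : MeasurableSet (closedBall x T ×ˢ Icc (1 : ℝ) T) :=
    measurableSet_closedBall.prod measurableSet_Icc
  have hb : ∀ q ∈ closedBall x T ×ˢ Icc (1 : ℝ) T, sqDens Φ f q ≤ ENNReal.ofReal ((3 * J) ^ 2) := by
    rintro q ⟨hq1, hq2⟩
    have ht : 0 < q.2 := by linarith [hq2.1]
    have hone : ∀ m : ℕ, (q.2 ^ m)⁻¹ ≤ 1 := fun m => inv_le_one_of_one_le₀ (one_le_pow₀ hq2.1)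
    have hd : dens Φ f q ≤ ENNReal.ofReal ((3 * J) ^ 2) := by
      refine iSup_le fun k => ?_
      rw [ENNReal.ofReal_pow (by positivity), Real.enorm_eq_ofReal_abs]
      gcongr
      refine (abs_conv_le hn hα hα1 (hΦ k) ht hf).trans ?_
      have hle : ∫ z in closedBall q.1 q.2, |f z| ≤ J := by
        refine setIntegral_mono_set ?_ (Filter.Eventually.of_forall fun _ => abs_nonneg _)
          (Filter.Eventually.of_forall ?_)
        · exact (hf.integrableOn_isCompact (isCompact_closedBall _ _)).norm
        · refine closedBall_subset_closedBall' ?_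
          have := mem_closedBall.1 hq1
          linarith [hq2.2]
      have h0 : 0 ≤ ∫ z in closedBall q.1 q.2, |f z| := integral_nonneg fun _ => abs_nonneg _
      have := hone n
      calc 3 * (q.2 ^ n)⁻¹ * ∫ z in closedBall q.1 q.2, |f z| ≤ 3 * 1 * J := by gcongr
        _ = 3 * J := by ring
    calc sqDens Φ f q ≤ ENNReal.ofReal ((3 * J) ^ 2) * ENNReal.ofReal 1 := by
          rw [sqDens]
          gcongr
          exact hone _
      _ = _ := by simp
  calc _ ≤ ∫⁻ q in closedBall x T ×ˢ Icc (1 : ℝ) T, ENNReal.ofReal ((3 * J) ^ 2) :=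
        setLIntegral_mono' hS hb
    _ = ENNReal.ofReal ((3 * J) ^ 2) * volume (closedBall x T ×ˢ Icc (1 : ℝ) T) :=
        setLIntegral_const _ _
    _ < ∞ := ENNReal.mul_lt_top ENNReal.ofReal_lt_top
        ((isCompact_closedBall x T).prod isCompact_Icc).measure_lt_top

/-- If the mass of one cone of aperture `1` diverges at great heights, then so does the mass of
every cone of aperture at least `2`, whatever its vertex. -/
lemma coneV_eq_top (hn : 0 < n) (hα : 0 < α) (hα1 : α ≤ 1) (hΦ : ∀ k, Φ k ∈ Calpha n α)
    {f : Rn n → ℝ} (hf : LocallyIntegrable f volume)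
    {x₀ : Rn n} (hloc : coneV (locDens Φ f) 1 x₀ < ∞) (htop : coneV (sqDens Φ f) 1 x₀ = ∞)
    {β : ℝ} (hβ : 2 ≤ β) (x : Rn n) : coneV (sqDens Φ f) β x = ∞ := by
  by_contra hx
  set T := dist x x₀ with hT
  have hlow : ∫⁻ q in {q : Rn n × ℝ | 0 < q.2 ∧ dist x₀ q.1 < 1 * q.2} ∩ {q | q.2 < 1},
      sqDens Φ f q < ∞ := by
    have : MeasurableSet {q : Rn n × ℝ | q.2 < 1} := measurableSet_lt measurable_snd measurable_const
    rwa [coneV, locDens, setLIntegral_indicator this, inter_comm] at hloc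
  have hmid := lintegral_mid_lt_top hn hα hα1 hΦ hf x₀ T
  have hcov : {q : Rn n × ℝ | 0 < q.2 ∧ dist x₀ q.1 < 1 * q.2} ⊆
      ({q : Rn n × ℝ | 0 < q.2 ∧ dist x₀ q.1 < 1 * q.2} ∩ {q | q.2 < 1}) ∪
      (closedBall x₀ T ×ˢ Icc (1 : ℝ) T ∪ {q : Rn n × ℝ | 0 < q.2 ∧ dist x q.1 < β * q.2}) := by
    rintro q ⟨hq0, hq⟩
    by_cases h1 : q.2 < 1
    · exact Or.inl ⟨⟨hq0, hq⟩, h1⟩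
    push Not at h1
    refine Or.inr ?_
    by_cases h2 : q.2 ≤ T
    · refine Or.inl ⟨?_, h1, h2⟩
      rw [mem_closedBall, dist_comm]
      linarith
    · push Not at h2
      refine Or.inr ⟨hq0, ?_⟩
      have := dist_triangle x x₀ q.1
      nlinarith
  have := (lintegral_mono_set (μ := volume) (f := sqDens Φ f) hcov).trans ((lintegral_union_le _ _ _).trans
    (add_le_add le_rfl (lintegral_union_le _ _ _)))
  rw [coneV] at htop
  rw [htop] at this
  have hx' := lt_top_iff_ne_top.2 hx
  rw [coneV] at hx'
  exact (ENNReal.add_lt_top.2 ⟨hlow, ENNReal.add_lt_top.2 ⟨hmid, hx'⟩⟩).not_ge this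

lemma eLpNorm_sqrt_toReal {p : ℝ} (hp : 0 < p) (V : Rn n → ℝ≥0∞) :
    eLpNorm (fun x => √(V x).toReal) (ENNReal.ofReal p) volume =
      (∫⁻ x, ENNReal.ofReal ((V x).toReal ^ (p / 2))) ^ (1 / p) := by
  rw [eLpNorm_eq_lintegral_rpow_enorm_toReal (by simpa using hp) ENNReal.ofReal_ne_top,
    ENNReal.toReal_ofReal hp.le]
  congr 1
  refine lintegral_congr fun x => ?_
  rw [Real.enorm_of_nonneg (Real.sqrt_nonneg _), ENNReal.ofReal_rpow_of_nonneg (Real.sqrt_nonneg _)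
    hp.le, Real.sqrt_eq_rpow, ← Real.rpow_mul ENNReal.toReal_nonneg]
  congr 2
  ring

end

/-- **Lemma 4.3.** Let `0 < α ≤ 1` and `1 ≤ p < 2`.  For every `j ∈ ℤ₊`,
`‖S_{α,2ʲ}(f)‖_{L^p} ≤ C ⬝ 2^{jn/p} ‖S_α(f)‖_{L^p}`. -/
theorem salpha_aperture_Lp_small
    (n : ℕ) (hn : 0 < n) (α p : ℝ) (hα0 : 0 < α) (hα1 : α ≤ 1)
    (hp1 : 1 ≤ p) (hp2 : p < 2) :
    ∃ C : ℝ, 0 < C ∧ ∀ j : ℕ, 1 ≤ j → ∀ f : Rn n → ℝ, LocallyIntegrable f volume →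
      eLpNorm (Salpha α (2 ^ j) f) (ENNReal.ofReal p) volume ≤
        ENNReal.ofReal (C * 2 ^ (((j * n : ℕ) : ℝ) / p)) *
          eLpNorm (Salpha α 1 f) (ENNReal.ofReal p) volume := by
  obtain ⟨Φ, hΦ, hd⟩ := exists_seq_dense (n := n) hα0
  have hp0 : 0 < p := by linarith
  set r := p / 2 with hr
  have hr0 : 0 < r := by positivity
  have hr1 : r < 1 := by rw [hr]; linarith
  have hc : 0 < 1 + r / (1 - r) := by
    have : 0 < 1 - r := by linarith
    positivity
  set K : ℝ := 2 * 5 ^ n * (1 + r / (1 - r)) with hK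
  have hK0 : 0 < K := by positivity
  refine ⟨K ^ (1 / p), by positivity, fun j hj f₀ hf₀ => ?_⟩
  -- Both sides depend only on the class of `f₀` modulo null sets.
  set f := hf₀.aestronglyMeasurable.mk f₀ with hfd
  have hff : f₀ =ᵐ[volume] f := hf₀.aestronglyMeasurable.ae_eq_mk
  have hfm : Measurable f := hf₀.aestronglyMeasurable.stronglyMeasurable_mk.measurable
  have hf : LocallyIntegrable f volume := hf₀.congr hff
  rw [Salpha_congr_ae _ hff, Salpha_congr_ae _ hff]
  have hS : ∀ β, Salpha α β f = fun x => √(coneV (sqDens Φ f) β x).toReal := fun β =>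
    funext fun x => Salpha_eq hn hα0 hα1 hΦ hd hfm hf β x
  rw [hS, hS, eLpNorm_sqrt_toReal hp0, eLpNorm_sqrt_toReal hp0]
  by_cases hfin : ∀ᵐ x, coneV (sqDens Φ f) 1 x < ∞
  · have hmain := lintegral_rpow_coneV_le hn (measurable_sqDens hα0 hΦ hfm)
      (one_le_pow₀ (by norm_num) : (1 : ℝ) ≤ 2 ^ j) hr0 hr1 hfin
    refine (ENNReal.rpow_le_rpow hmain (by positivity : 0 ≤ 1 / p)).trans_eq ?_
    rw [ENNReal.mul_rpow_of_nonneg _ _ (by positivity), ENNReal.ofReal_rpow_of_nonneg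
      (by positivity) (by positivity)]
    congr 2
    have : 2 * (5 * (2 : ℝ) ^ j) ^ n * (1 + r / (1 - r)) = K * 2 ^ ((j * n : ℕ) : ℝ) := by
      rw [hK, Real.rpow_natCast, pow_mul, mul_pow]
      ring
    rw [this, Real.mul_rpow hK0.le (by positivity), ← Real.rpow_mul (by norm_num), mul_one_div]
  · -- Some cone diverges at infinity, so all wider ones do and the left-hand side is `0`.
    have hloc := ae_coneV_locDens_lt_top hn hα0 hα1 hfm hf hΦ
    obtain ⟨x₀, hx₀, hx₀l⟩ : ∃ x₀, ¬ coneV (sqDens Φ f) 1 x₀ < ∞ ∧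
        coneV (locDens Φ f) 1 x₀ < ∞ := by
      by_contra! hcon
      exact hfin (hloc.mono fun x hx => by
        by_contra h
        exact hx.not_ge (hcon x (not_lt.1 h)))
    have h2 : (2 : ℝ) ≤ 2 ^ j := le_self_pow₀ (by norm_num) (by omega)
    have htop := coneV_eq_top hn hα0 hα1 hΦ hf hx₀l (not_lt_top_iff.1 hx₀) h2
    have hph : p / 2 ≠ 0 := by positivity
    have hpi : 0 < p⁻¹ := by positivity
    simp [htop, Real.zero_rpow hph, hpi]
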